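/- Let f(x) = x² + bx + c with b, c ∈ ℤ and non-square discriminant D = b² - 4c. The set of squarefree integers n with exactly k prime factors, all coprime to 2D, such that f has exactly 2^k roots modulo n, has density 1/2^k among squarefree integers n ≤ x with k prime factors, as x → ∞. -/

import Mathlib

open Filter Asymptotics
open scoped Classical

/-!
The Wiener–Ikehara theorem, applied to the von Mangoldt function of a residue class, gives the prime
number theorem in arithmetic progressions. Since `D` is not a square, the Jacobi symbol `J(D | ·)`
is a nontrivial character modulo `4 * |D|`, so it takes the value `1` on half of all primes.
By the Chinese remainder theorem `f` has `2 ^ k` roots modulo a squarefree `n` coprime to `2 * D`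
with `k` prime factors exactly when `J(D | p) = 1` for every prime `p ∣ n`.

It remains to see that if a set `S` of primes has relative density `δ`, then the squarefree integers
with `k` prime factors, all in `S`, have relative density `δ ^ k`. Let `N k x` be the number of all
squarefree integers up to `x` with `k` prime factors. Counting the pairs `(p, m)` with `p * m ≤ x`,
where `p ∈ S` and `m` has `k` prime factors in `S`, gives `k + 1` times the count for `k + 1`, with
an error of at most `k * N k x` from the pairs with `p ∣ m`. Dropping the condition on `p` and then,
by induction, the condition on `m` costs factors `δ` and `δ ^ k`. All errors are negligible because
`N k = o(N (k + 1))`, a consequence of the divergence of `∑ 1 / p` and of the lower bound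
`N k (x / d) ≫ N k x / d`, with a constant independent of `d`.
-/

/-! ### Band-limited kernels -/

section BandLimitedKernel

open MeasureTheory Topology FourierTransform
open scoped Convolution ContDiff

lemma conj_fourier_eq_self_of_hermitian {φ : ℝ → ℂ} (hφ : ∀ x, φ (-x) = (starRingEnd ℂ) (φ x))
    (v : ℝ) : (starRingEnd ℂ) (𝓕 φ v) = 𝓕 φ v := by
  rw [Real.fourier_real_eq, ← integral_conj, ← integral_neg_eq_self]
  congr 1
  ext x
  simp only [Circle.smul_def, smul_eq_mul, map_mul, hφ, Complex.conj_conj, neg_mul, neg_neg,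
    ← Circle.coe_inv_eq_conj, ← AddChar.map_neg_eq_inv]

lemma integrable_schwartzMap_mul_self (f : SchwartzMap ℝ ℂ) : Integrable fun v => f v * f v :=
  f.integrable.mul_bdd (c := SchwartzMap.seminorm ℝ 0 0 f) f.continuous.aestronglyMeasurable
    (Eventually.of_forall fun v => SchwartzMap.norm_le_seminorm ℝ f v)

/-- A probability density on `ℝ` that is the Fourier transform of a continuous compactly supported
function, its spectrum. Such densities serve as smoothing kernels: averaging against them only
involves a bounded range of frequencies. -/
structure BandLimitedKernel where
  density : ℝ → ℝ
  spectrum : ℝ → ℂ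
  continuous_spectrum : Continuous spectrum
  hasCompactSupport_spectrum : HasCompactSupport spectrum
  fourier_spectrum : ∀ v, 𝓕 spectrum v = density v
  density_nonneg : ∀ v, 0 ≤ density v
  integrable_density : Integrable density
  integral_density : ∫ v, density v = 1

namespace BandLimitedKernel

/-- The self-convolution of a Hermitian function `φ` has Fourier transform `(𝓕 φ)² ≥ 0`. -/
lemma nonempty_of_hermitian {φ : ℝ → ℂ} (hsmooth : ContDiff ℝ ∞ φ) (hsupp : HasCompactSupport φ)
    (hherm : ∀ x, φ (-x) = (starRingEnd ℂ) (φ x)) (hφ : ∫ x, φ x ≠ 0) :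
    Nonempty BandLimitedKernel := by
  have hint : Integrable φ := hsmooth.continuous.integrable_of_hasCompactSupport hsupp
  obtain ⟨f, hf⟩ : ∃ f : SchwartzMap ℝ ℂ, ⇑f = 𝓕 φ :=
    ⟨𝓕 (hsupp.toSchwartzMap hsmooth), SchwartzMap.fourier_coe _⟩
  have hreal (v : ℝ) : f v = ((f v).re : ℂ) :=
    (Complex.conj_eq_iff_re.1 (hf ▸ conj_fourier_eq_self_of_hermitian hherm v)).symm
  have hsq : Integrable fun v => (f v).re ^ 2 := by
    refine (integrable_schwartzMap_mul_self f).re.congr (Eventually.of_forall fun v => ?_)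
    simp only [RCLike.re_eq_complex_re]
    rw [hreal v, ← Complex.ofReal_mul, Complex.ofReal_re, Complex.ofReal_re, pow_two]
  have hzero : (f 0).re ≠ 0 := by
    have : f 0 = ∫ x, φ x := by simp [hf, Real.fourier_real_eq]
    rwa [← this, hreal, Complex.ofReal_ne_zero] at hφ
  have hpos : 0 < ∫ v, (f v).re ^ 2 := by
    refine (integral_pos_iff_support_of_nonneg (fun v => sq_nonneg _) hsq).2 ?_
    have hcont : Continuous fun v => (f v).re ^ 2 := by fun_prop
    exact hcont.isOpen_support.measure_pos _ ⟨0, pow_ne_zero 2 hzero⟩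
  generalize hI : ∫ v, (f v).re ^ 2 = I at hpos
  exact ⟨{
    density := fun v => I⁻¹ * (f v).re ^ 2
    spectrum := (I⁻¹ : ℂ) • (φ ⋆[ContinuousLinearMap.mul ℂ ℂ] φ)
    continuous_spectrum := (hsupp.continuous_convolution_right _ hint.locallyIntegrable
      hsmooth.continuous).const_smul _
    hasCompactSupport_spectrum := (hsupp.convolution _ hsupp).smul_left
    fourier_spectrum := fun v => by
      refine (congrFun (VectorFourier.fourierIntegral_const_smul _ _ _ _ _) v).trans ?_
      change (I⁻¹ : ℂ) * 𝓕 (φ ⋆[ContinuousLinearMap.mul ℂ ℂ] φ) v = _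
      rw [Real.fourier_mul_convolution_eq hint hint, ← hf, hreal v]
      push_cast
      rw [Complex.ofReal_re, pow_two]
    density_nonneg := fun v => by positivity
    integrable_density := hsq.const_mul _
    integral_density := by rw [integral_const_mul, hI, inv_mul_cancel₀ hpos.ne'] }⟩

instance : Nonempty BandLimitedKernel := by
  let b : ContDiffBump (0 : ℝ) := ⟨1, 2, one_pos, one_lt_two⟩
  refine nonempty_of_hermitian (φ := fun x => (b x : ℂ))
    (Complex.ofRealCLM.contDiff.comp b.contDiff)
    (b.hasCompactSupport.comp_left Complex.ofReal_zero) (fun x => ?_) ?_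
  · rw [b.neg, Complex.conj_ofReal]
  · rw [integral_complex_ofReal]
    exact Complex.ofReal_ne_zero.2 b.integral_pos.ne'

/-- The rescaled kernel with density `v ↦ l * density (l * v)`. -/
noncomputable def dilate (k : BandLimitedKernel) {l : ℝ} (hl : 0 < l) : BandLimitedKernel where
  density v := l * k.density (l * v)
  spectrum u := k.spectrum (l⁻¹ * u)
  continuous_spectrum := k.continuous_spectrum.comp (continuous_const_mul _)
  hasCompactSupport_spectrum := k.hasCompactSupport_spectrum.comp_homeomorph
    (Homeomorph.mulLeft₀ l⁻¹ (inv_ne_zero hl.ne'))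
  fourier_spectrum v := by
    have hscale := Measure.integral_comp_mul_left
      (fun x : ℝ => Real.fourierChar (-(x * (l * v))) • k.spectrum x) l⁻¹
    have hphase (u : ℝ) : l⁻¹ * u * (l * v) = u * v := by field_simp
    simp only [hphase, ← Real.fourier_real_eq, k.fourier_spectrum] at hscale
    rw [hscale, inv_inv, abs_of_pos hl]
    simp
  density_nonneg v := mul_nonneg hl.le (k.density_nonneg _)
  integrable_density := (k.integrable_density.comp_mul_left' hl.ne').const_mul l
  integral_density := by
    rw [integral_const_mul, Measure.integral_comp_mul_left, abs_of_pos (inv_pos.2 hl),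
      k.integral_density, smul_eq_mul, mul_one, mul_inv_cancel₀ hl.ne']

lemma setIntegral_Icc_dilate (k : BandLimitedKernel) {l s : ℝ} (hl : 0 < l) (hs : 0 < s) :
    ∫ v in Set.Icc (-s) s, (k.dilate hl).density v =
      ∫ v in Set.Icc (-(l * s)) (l * s), k.density v := by
  have hls : 0 < l * s := mul_pos hl hs
  simp only [dilate, integral_Icc_eq_integral_Ioc, integral_const_mul]
  rw [← intervalIntegral.integral_of_le (by linarith),
    ← intervalIntegral.integral_of_le (by linarith),
    intervalIntegral.integral_comp_mul_left _ hl.ne', smul_eq_mul, mul_neg,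
    mul_inv_cancel_left₀ hl.ne']

lemma exists_concentrated {s η : ℝ} (hs : 0 < s) (hη : 0 < η) :
    ∃ k : BandLimitedKernel, 1 - η ≤ ∫ v in Set.Icc (-s) s, k.density v := by
  obtain ⟨k⟩ : Nonempty BandLimitedKernel := inferInstance
  have hgrow : Tendsto (fun l : ℝ => l * s) atTop atTop := tendsto_id.atTop_mul_const hs
  have hmass : Tendsto (fun l : ℝ => ∫ v in Set.Icc (-(l * s)) (l * s), k.density v) atTop
      (𝓝 1) := by
    rw [← k.integral_density]
    exact (aecover_Icc (tendsto_neg_atTop_atBot.comp hgrow)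
      hgrow).integral_tendsto_of_countably_generated k.integrable_density
  obtain ⟨l, hl, hl0⟩ := ((hmass.eventually (lt_mem_nhds (sub_lt_self 1 hη))).and
    (eventually_gt_atTop 0)).exists
  exact ⟨k.dilate hl0, (k.setIntegral_Icc_dilate hl0 hs).symm ▸ hl.le⟩

lemma integral_compl_Icc (k : BandLimitedKernel) {s : Set ℝ} (hs : MeasurableSet s) :
    ∫ v in sᶜ, k.density v = 1 - ∫ v in s, k.density v := by
  rw [← k.integral_density, ← integral_add_compl hs k.integrable_density, add_sub_cancel_left]

end BandLimitedKernel

end BandLimitedKernel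

/-! ### A Tauberian theorem for Laplace transforms -/

section LaplaceTauberian

open MeasureTheory Topology FourierTransform

lemma integrable_mul_exp_neg {f : ℝ → ℂ} (hf : Measurable f) {M : ℝ} (hM : ∀ t, ‖f t‖ ≤ M)
    (hneg : ∀ t < 0, f t = 0) {s : ℂ} (hs : 0 < s.re) :
    Integrable fun t : ℝ => f t * Complex.exp (-s * t) := by
  have hexp : Integrable ((Set.Ici (0 : ℝ)).indicator fun t => M * Real.exp (-s.re * t)) := by
    rw [integrable_indicator_iff measurableSet_Ici, integrableOn_Ici_iff_integrableOn_Ioi]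
    exact (integrableOn_exp_mul_Ioi (neg_lt_zero.2 hs) 0).const_mul M
  refine hexp.mono' (by fun_prop) (Eventually.of_forall fun t => ?_)
  rcases lt_or_ge t 0 with ht | ht
  · simp [hneg t ht, ht.not_ge]
  · rw [Set.indicator_of_mem (Set.mem_Ici.2 ht), norm_mul, Complex.norm_exp]
    simpa using mul_le_mul_of_nonneg_right (hM t) (Real.exp_pos (-(s.re * t))).le

lemma tendsto_integral_mul_exp_neg {h : ℝ → ℂ} (hh : Integrable h) (hneg : ∀ t < 0, h t = 0) :
    Tendsto (fun ε : ℝ => ∫ t : ℝ, h t * Complex.exp (-ε * t)) (𝓝[>] 0) (𝓝 (∫ t, h t)) := by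
  refine tendsto_integral_filter_of_dominated_convergence (fun t => ‖h t‖)
    (Eventually.of_forall fun ε => hh.aestronglyMeasurable.mul (by fun_prop)) ?_ hh.norm
    (Eventually.of_forall fun t => ?_)
  · filter_upwards [self_mem_nhdsWithin] with ε (hε : 0 < ε)
    refine Eventually.of_forall fun t => ?_
    rcases lt_or_ge t 0 with ht | ht
    · simp [hneg t ht]
    · rw [norm_mul, Complex.norm_exp]
      refine mul_le_of_le_one_right (norm_nonneg _) (Real.exp_le_one_iff.2 ?_)
      simpa using mul_nonneg hε.le ht
  · have hcont : Continuous fun ε : ℝ => h t * Complex.exp (-ε * t) := by fun_prop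
    simpa using (hcont.tendsto 0).mono_left nhdsWithin_le_nhds

namespace BandLimitedKernel

variable (k : BandLimitedKernel)

lemma integrable_spectrum : Integrable k.spectrum :=
  k.continuous_spectrum.integrable_of_hasCompactSupport k.hasCompactSupport_spectrum

/-- The translated kernel with density `v ↦ density (v - y)`. -/
noncomputable def translate (y : ℝ) : BandLimitedKernel where
  density v := k.density (v - y)
  spectrum u := 𝐞 (u * y) • k.spectrum u
  continuous_spectrum := Continuous.smul (M := Circle)
    (Real.continuous_fourierChar.comp (continuous_mul_const y)) k.continuous_spectrum
  hasCompactSupport_spectrum := k.hasCompactSupport_spectrum.smul_left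
  fourier_spectrum v := by
    rw [← k.fourier_spectrum, Real.fourier_real_eq, Real.fourier_real_eq]
    congr 1
    ext u
    rw [smul_smul, ← AddChar.map_add_eq_mul]
    congr 2
    ring
  density_nonneg v := k.density_nonneg _
  integrable_density := k.integrable_density.comp_sub_right y
  integral_density := by rw [integral_sub_right_eq_self, k.integral_density]

lemma integral_mul_density {F : ℝ → ℂ} (hF : Integrable F) :
    ∫ t, F t * k.density t = ∫ u, k.spectrum u * 𝓕 F u := by
  have hflip := VectorFourier.integral_fourierIntegral_smul_eq_flip (L := innerₗ ℝ)
    (μ := volume) (ν := volume) Real.continuous_fourierChar (by exact continuous_inner)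
    k.integrable_spectrum hF
  rw [flip_innerₗ] at hflip
  simp only [smul_eq_mul] at hflip
  refine Eq.trans (integral_congr_ae (Eventually.of_forall fun t => ?_)) hflip
  exact (mul_comm _ _).trans (congrArg (· * F t) (k.fourier_spectrum t).symm)

end BandLimitedKernel

lemma fourier_mul_exp_neg (f : ℝ → ℂ) (ε u : ℝ) :
    𝓕 (fun t : ℝ => f t * Complex.exp (-ε * t)) u =
      ∫ t : ℝ, f t * Complex.exp (-(ε + 2 * Real.pi * Complex.I * u) * t) := by
  rw [Real.fourier_real_eq_integral_exp_smul]
  congr 1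
  ext t
  rw [smul_eq_mul, mul_left_comm, ← Complex.exp_add]
  push_cast
  ring_nf

/-- Parseval's identity on the boundary line `re s = 0`, as the limit of the lines `re s = ε`. -/
lemma BandLimitedKernel.integral_mul_density_eq_of_laplace (k : BandLimitedKernel) {f : ℝ → ℂ}
    (hf : Measurable f) {M : ℝ} (hM : ∀ t, ‖f t‖ ≤ M) (hneg : ∀ t < 0, f t = 0) {H : ℂ → ℂ}
    (hH : ContinuousOn H {s | 0 ≤ s.re})
    (hlap : ∀ s : ℂ, 0 < s.re → ∫ t : ℝ, f t * Complex.exp (-s * t) = H s) :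
    ∫ t, f t * k.density t = ∫ u : ℝ, k.spectrum u * H (2 * Real.pi * Complex.I * u) := by
  have hfk : Integrable fun t => f t * (k.density t : ℂ) :=
    k.integrable_density.ofReal.bdd_mul hf.aestronglyMeasurable (Eventually.of_forall hM)
  have hleft := tendsto_integral_mul_exp_neg hfk fun t ht => by rw [hneg t ht, zero_mul]
  have hright : Tendsto
      (fun ε : ℝ => ∫ u : ℝ, k.spectrum u * H (ε + 2 * Real.pi * Complex.I * u)) (𝓝[>] 0)
      (𝓝 (∫ u : ℝ, k.spectrum u * H (2 * Real.pi * Complex.I * u))) := by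
    have hcont := continuousOn_integral_of_compact_support (μ := volume) (s := Set.Ici (0 : ℝ))
      (f := fun ε u : ℝ => k.spectrum u * H (ε + 2 * Real.pi * Complex.I * u))
      k.hasCompactSupport_spectrum
      ((k.continuous_spectrum.comp continuous_snd).continuousOn.mul
        (hH.comp (by fun_prop) fun p hp => by simpa using hp.1))
      (fun ε u _ hu => by rw [image_eq_zero_of_notMem_tsupport hu, zero_mul])
    simpa using (hcont 0 Set.self_mem_Ici).tendsto.mono_left
      (nhdsWithin_mono 0 Set.Ioi_subset_Ici_self)
  refine tendsto_nhds_unique (hleft.congr' ?_) hright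
  filter_upwards [self_mem_nhdsWithin] with ε (hε : 0 < ε)
  calc ∫ t : ℝ, f t * k.density t * Complex.exp (-ε * t)
      = ∫ t : ℝ, f t * Complex.exp (-ε * t) * k.density t := by simp only [mul_right_comm]
    _ = ∫ u, k.spectrum u * 𝓕 (fun t : ℝ => f t * Complex.exp (-ε * t)) u :=
        k.integral_mul_density (integrable_mul_exp_neg hf hM hneg (s := ε) hε)
    _ = ∫ u : ℝ, k.spectrum u * H (ε + 2 * Real.pi * Complex.I * u) := by
        congr 1
        ext u
        rw [fourier_mul_exp_neg, hlap _ (by simpa using hε)]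

lemma BandLimitedKernel.tendsto_integral_mul_density_of_laplace (k : BandLimitedKernel)
    {f : ℝ → ℂ} (hf : Measurable f) {M : ℝ} (hM : ∀ t, ‖f t‖ ≤ M) (hneg : ∀ t < 0, f t = 0)
    {H : ℂ → ℂ} (hH : ContinuousOn H {s | 0 ≤ s.re})
    (hlap : ∀ s : ℂ, 0 < s.re → ∫ t : ℝ, f t * Complex.exp (-s * t) = H s) :
    Tendsto (fun y => ∫ t, f t * k.density (t - y)) atTop (𝓝 0) := by
  have hRL := (Real.tendsto_integral_exp_smul_cocompact
    (fun u : ℝ => k.spectrum u * H (2 * Real.pi * Complex.I * u))).comp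
    (tendsto_neg_atTop_atBot.mono_right atBot_le_cocompact)
  refine hRL.congr fun y => ?_
  rw [show (∫ t, f t * k.density (t - y)) = ∫ t, f t * (k.translate y).density t from rfl,
    (k.translate y).integral_mul_density_eq_of_laplace hf hM hneg hH hlap]
  simp [BandLimitedKernel.translate, Circle.smul_def, mul_assoc]

end LaplaceTauberian

section Tauberian

open MeasureTheory Topology

namespace BandLimitedKernel

variable (k : BandLimitedKernel)

lemma setIntegral_Icc_translate (y a b : ℝ) :
    ∫ t in Set.Icc (y + a) (y + b), (k.translate y).density t =
      ∫ t in Set.Icc a b, k.density t := by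
  have hpre := (measurePreserving_sub_right volume y).setIntegral_preimage_emb
    (measurableEmbedding_subRight y) k.density (Set.Icc a b)
  simpa [translate, Set.preimage_sub_const_Icc, add_comm] using hpre

lemma tendsto_setIntegral_Ici_translate :
    Tendsto (fun y => ∫ t in Set.Ici 0, (k.translate y).density t) atTop (𝓝 1) := by
  have hcover := (aecover_Ici (μ := volume)
    tendsto_neg_atTop_atBot).integral_tendsto_of_countably_generated k.integrable_density
  rw [k.integral_density] at hcover
  refine hcover.congr fun y => ?_
  have hpre := (measurePreserving_sub_right volume y).setIntegral_preimage_emb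
    (measurableEmbedding_subRight y) k.density (Set.Ici (-y))
  simpa [translate, Set.preimage_sub_const_Ici] using hpre.symm

lemma integrable_mul_density {B : ℝ → ℝ} (hB : Measurable B) {M : ℝ} (hM : ∀ t, |B t| ≤ M) :
    Integrable fun t => B t * k.density t :=
  k.integrable_density.bdd_mul hB.aestronglyMeasurable (Eventually.of_forall hM)

end BandLimitedKernel

lemma exp_sub_mul_le_of_monotone_exp_mul {B : ℝ → ℝ} (hB : Monotone fun t => Real.exp t * B t)
    (hB0 : ∀ t, 0 ≤ B t) {a b s t : ℝ} (hst : s ≤ t) (has : a ≤ s) (htb : t ≤ b) :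
    Real.exp (a - b) * B s ≤ B t := by
  calc Real.exp (a - b) * B s ≤ Real.exp (s - t) * B s := by gcongr; exact hB0 s
    _ = Real.exp (-t) * (Real.exp s * B s) := by rw [← mul_assoc, ← Real.exp_add]; ring_nf
    _ ≤ Real.exp (-t) * (Real.exp t * B t) :=
        mul_le_mul_of_nonneg_left (hB hst) (Real.exp_pos _).le
    _ = B t := by rw [← mul_assoc, ← Real.exp_add, neg_add_cancel, Real.exp_zero, one_mul]

namespace BandLimitedKernel

variable (k : BandLimitedKernel) {B : ℝ → ℝ} (hB : Measurable B)
  (hexp : Monotone fun t => Real.exp t * B t) (hB0 : ∀ t, 0 ≤ B t) {M : ℝ} (hM : ∀ t, B t ≤ M)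
include hB hexp hB0 hM

lemma mul_setIntegral_le_integral_mul_density {a b : ℝ} :
    Real.exp (a - b) * B a * ∫ t in Set.Icc a b, k.density t ≤ ∫ t, B t * k.density t := by
  have hint := k.integrable_mul_density hB fun t => (abs_of_nonneg (hB0 t)).trans_le (hM t)
  rw [← integral_const_mul]
  refine (setIntegral_mono_on (k.integrable_density.integrableOn.const_mul _) hint.integrableOn
    measurableSet_Icc fun t ht => ?_).trans (setIntegral_le_integral hint
      (Eventually.of_forall fun t => mul_nonneg (hB0 t) (k.density_nonneg t)))
  exact mul_le_mul_of_nonneg_right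
    (exp_sub_mul_le_of_monotone_exp_mul hexp hB0 ht.1 le_rfl ht.2) (k.density_nonneg t)

lemma integral_mul_density_le {a b : ℝ} :
    ∫ t, B t * k.density t ≤
      Real.exp (b - a) * B b + M * (1 - ∫ t in Set.Icc a b, k.density t) := by
  have hint := k.integrable_mul_density hB fun t => (abs_of_nonneg (hB0 t)).trans_le (hM t)
  have hdens (c : ℝ) (s : Set ℝ) : IntegrableOn (fun t => c * k.density t) s :=
    (k.integrable_density.const_mul c).integrableOn
  have hle (t : ℝ) (ht : t ∈ Set.Icc a b) : B t ≤ Real.exp (b - a) * B b := by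
    have h := exp_sub_mul_le_of_monotone_exp_mul hexp hB0 ht.2 ht.1 le_rfl
    rw [← neg_sub b a, Real.exp_neg] at h
    rwa [inv_mul_le_iff₀ (Real.exp_pos _)] at h
  rw [← integral_add_compl measurableSet_Icc hint (s := Set.Icc a b),
    ← k.integral_compl_Icc measurableSet_Icc]
  gcongr
  · calc ∫ t in Set.Icc a b, B t * k.density t
        ≤ ∫ t in Set.Icc a b, Real.exp (b - a) * B b * k.density t :=
          setIntegral_mono_on hint.integrableOn (hdens _ _) measurableSet_Icc fun t ht =>
            mul_le_mul_of_nonneg_right (hle t ht) (k.density_nonneg t)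
      _ ≤ ∫ t, Real.exp (b - a) * B b * k.density t :=
          setIntegral_le_integral (k.integrable_density.const_mul _) (Eventually.of_forall fun t =>
            mul_nonneg (mul_nonneg (Real.exp_pos _).le (hB0 b)) (k.density_nonneg t))
      _ = Real.exp (b - a) * B b := by rw [integral_const_mul, k.integral_density, mul_one]
  · rw [← integral_const_mul]
    exact setIntegral_mono hint.integrableOn (hdens _ _) fun t =>
      mul_le_mul_of_nonneg_right (hM t) (k.density_nonneg t)

end BandLimitedKernel

lemma tendsto_smoothed_of_laplace {B : ℝ → ℝ} (hB : Measurable B) {M : ℝ} (hM : ∀ t, |B t| ≤ M)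
    (hneg : ∀ t < 0, B t = 0) {κ : ℝ} {H : ℂ → ℂ} (hH : ContinuousOn H {s | 0 ≤ s.re})
    (hlap : ∀ s : ℂ, 0 < s.re →
      ∫ t : ℝ, ((B t - (Set.Ici (0 : ℝ)).indicator (fun _ => κ) t : ℝ) : ℂ) *
        Complex.exp (-s * t) = H s) (k : BandLimitedKernel) :
    Tendsto (fun y => ∫ t, B t * (k.translate y).density t) atTop (𝓝 κ) := by
  set J : ℝ → ℝ := (Set.Ici (0 : ℝ)).indicator fun _ => κ
  have hJmeas : Measurable J := measurable_const.indicator measurableSet_Ici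
  have hJbound (t : ℝ) : |J t| ≤ |κ| := norm_indicator_le_norm_self (fun _ => κ) t
  have hdiff : Tendsto (fun y => ∫ t, (B t - J t) * (k.translate y).density t) atTop (𝓝 0) := by
    have h := k.tendsto_integral_mul_density_of_laplace (f := fun t => ((B t - J t : ℝ) : ℂ))
      (by fun_prop) (M := M + |κ|)
      (fun t => by
        rw [Complex.norm_real]
        exact (norm_sub_le _ _).trans (add_le_add (hM t) (hJbound t)))
      (fun t ht => by simp [J, hneg t ht, ht.not_ge]) hH hlap
    simp only [← Complex.ofReal_mul, integral_complex_ofReal] at h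
    exact (Complex.continuous_re.tendsto 0).comp h
  have hJ : Tendsto (fun y => ∫ t, J t * (k.translate y).density t) atTop (𝓝 κ) := by
    have h := k.tendsto_setIntegral_Ici_translate.const_mul κ
    rw [mul_one] at h
    refine h.congr fun y => ?_
    rw [← integral_const_mul, ← integral_indicator measurableSet_Ici]
    simp only [J, Set.indicator_mul_left]
  refine ((hdiff.add hJ).congr fun y => ?_).trans (by rw [zero_add])
  rw [← integral_add]
  · simp only [sub_mul, sub_add_cancel]
  · simp only [sub_mul]
    exact ((k.translate y).integrable_mul_density hB hM).sub
      ((k.translate y).integrable_mul_density hJmeas hJbound)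
  · exact (k.translate y).integrable_mul_density hJmeas hJbound

lemma eventually_bounds_of_tendsto_smoothed {B : ℝ → ℝ} (hB : Measurable B)
    (hexp : Monotone fun t => Real.exp t * B t) (hB0 : ∀ t, 0 ≤ B t) {M : ℝ} (hM : ∀ t, B t ≤ M)
    {κ : ℝ} (hlim : ∀ k : BandLimitedKernel,
      Tendsto (fun y => ∫ t, B t * (k.translate y).density t) atTop (𝓝 κ))
    {η : ℝ} (hη : 0 < η) :
    ∀ᶠ y in atTop, Real.exp (-(2 * η)) * (κ - η - M * η) ≤ B y ∧
      (1 - η) * B y ≤ Real.exp (2 * η) * (κ + η) := by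
  obtain ⟨k, hk⟩ := BandLimitedKernel.exists_concentrated hη hη
  have hM0 : 0 ≤ M := (hB0 0).trans (hM 0)
  have hup := (tendsto_atTop_add_const_right atTop η tendsto_id).eventually
    ((hlim k).eventually (gt_mem_nhds (lt_add_of_pos_right κ hη)))
  have hlow := (tendsto_atTop_add_const_right atTop (-η) tendsto_id).eventually
    ((hlim k).eventually (lt_mem_nhds (sub_lt_self κ hη)))
  filter_upwards [hup, hlow] with y hyup hylow
  simp only [id_eq] at hyup hylow
  constructor
  · have h := (k.translate (y + -η)).integral_mul_density_le hB hexp hB0 hM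
      (a := y + -η + -η) (b := y + -η + η)
    rw [k.setIntegral_Icc_translate, neg_add_cancel_right,
      show y - (y + -η + -η) = 2 * η by ring] at h
    rw [Real.exp_neg, inv_mul_le_iff₀ (Real.exp_pos _)]
    nlinarith
  · have h := (k.translate (y + η)).mul_setIntegral_le_integral_mul_density hB hexp hB0 hM
      (a := y + η + -η) (b := y + η + η)
    rw [k.setIntegral_Icc_translate, add_neg_cancel_right,
      show y - (y + η + η) = -(2 * η) by ring, mul_assoc] at h
    rw [← inv_mul_le_iff₀ (Real.exp_pos _), ← Real.exp_neg]
    refine le_trans ?_ (h.trans hyup.le)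
    rw [mul_comm (1 - η)]
    gcongr
    exact hB0 y

lemma tendsto_of_laplace_of_monotone_exp_mul {B : ℝ → ℝ} (hB : Measurable B)
    (hexp : Monotone fun t => Real.exp t * B t) (hB0 : ∀ t, 0 ≤ B t) {M : ℝ} (hM : ∀ t, B t ≤ M)
    (hneg : ∀ t < 0, B t = 0) {κ : ℝ} {H : ℂ → ℂ} (hH : ContinuousOn H {s | 0 ≤ s.re})
    (hlap : ∀ s : ℂ, 0 < s.re →
      ∫ t : ℝ, ((B t - (Set.Ici (0 : ℝ)).indicator (fun _ => κ) t : ℝ) : ℂ) *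
        Complex.exp (-s * t) = H s) :
    Tendsto B atTop (𝓝 κ) := by
  have hlim := tendsto_smoothed_of_laplace hB
    (fun t => (abs_of_nonneg (hB0 t)).trans_le (hM t)) hneg hH hlap
  have hlow : Tendsto (fun η : ℝ => Real.exp (-(2 * η)) * (κ - η - M * η)) (𝓝[>] 0) (𝓝 κ) := by
    have hcont : Continuous fun η : ℝ => Real.exp (-(2 * η)) * (κ - η - M * η) := by fun_prop
    simpa using (hcont.tendsto 0).mono_left nhdsWithin_le_nhds
  have hup : Tendsto (fun η : ℝ => Real.exp (2 * η) * (κ + η) / (1 - η)) (𝓝[>] 0) (𝓝 κ) := by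
    have hcont : ContinuousAt (fun η : ℝ => Real.exp (2 * η) * (κ + η) / (1 - η)) 0 :=
      ContinuousAt.div (by fun_prop) (by fun_prop) (by simp)
    simpa using hcont.tendsto.mono_left nhdsWithin_le_nhds
  have hsmall : Set.Ioo (0 : ℝ) 1 ∈ 𝓝[>] (0 : ℝ) := Ioo_mem_nhdsGT one_pos
  refine tendsto_order.2 ⟨fun c hc => ?_, fun c hc => ?_⟩
  · obtain ⟨η, hcη, hη⟩ := ((hlow.eventually (lt_mem_nhds hc)).and hsmall).exists
    filter_upwards [eventually_bounds_of_tendsto_smoothed hB hexp hB0 hM hlim hη.1] with y hy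
    exact hcη.trans_le hy.1
  · obtain ⟨η, hcη, hη⟩ := ((hup.eventually (gt_mem_nhds hc)).and hsmall).exists
    filter_upwards [eventually_bounds_of_tendsto_smoothed hB hexp hB0 hM hlim hη.1] with y hy
    exact ((le_div_iff₀' (sub_pos.2 hη.2)).2 hy.2).trans_lt hcη

end Tauberian

/-! ### The Wiener–Ikehara theorem -/

section WienerIkehara

open MeasureTheory Topology

/-- The function `t ↦ e⁻ᵗ S(eᵗ)` on `[0, ∞)`, extended by zero. Its Laplace transform at `s` is the
Mellin integral `∫_{x > 1} S(x) x⁻⁽ˢ⁺²⁾ dx`. -/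
noncomputable def expNormalized (S : ℝ → ℝ) : ℝ → ℝ :=
  (Set.Ici 0).indicator fun t => Real.exp (-t) * S (Real.exp t)

section expNormalized

variable {S : ℝ → ℝ}

lemma expNormalized_of_nonneg {t : ℝ} (ht : 0 ≤ t) :
    expNormalized S t = Real.exp (-t) * S (Real.exp t) :=
  Set.indicator_of_mem (Set.mem_Ici.2 ht) _

lemma expNormalized_of_neg {t : ℝ} (ht : t < 0) : expNormalized S t = 0 :=
  Set.indicator_of_notMem (fun h => ht.not_ge h) _

lemma expNormalized_nonneg (hS : ∀ x, 0 ≤ S x) (t : ℝ) : 0 ≤ expNormalized S t :=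
  Set.indicator_nonneg (fun _ _ => mul_nonneg (Real.exp_pos _).le (hS _)) t

lemma expNormalized_le {M : ℝ} (hM0 : 0 ≤ M) (hM : ∀ x, 0 ≤ x → S x ≤ M * x) (t : ℝ) :
    expNormalized S t ≤ M := by
  rcases lt_or_ge t 0 with ht | ht
  · rwa [expNormalized_of_neg ht]
  · rw [expNormalized_of_nonneg ht, Real.exp_neg, inv_mul_le_iff₀ (Real.exp_pos t), mul_comm]
    exact hM _ (Real.exp_pos t).le

lemma measurable_expNormalized (hS : Monotone S) : Measurable (expNormalized S) := by
  have hexp : Measurable fun t : ℝ => Real.exp (-t) := by fun_prop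
  exact (hexp.mul (hS.comp Real.exp_monotone).measurable).indicator measurableSet_Ici

lemma monotone_exp_mul_expNormalized (hS : Monotone S) (hS0 : ∀ x, 0 ≤ S x) :
    Monotone fun t => Real.exp t * expNormalized S t := by
  have hexp {t : ℝ} (ht : 0 ≤ t) : Real.exp t * expNormalized S t = S (Real.exp t) := by
    rw [expNormalized_of_nonneg ht, ← mul_assoc, ← Real.exp_add, add_neg_cancel, Real.exp_zero,
      one_mul]
  intro t u htu
  rcases lt_or_ge t 0 with ht | ht
  · simp only [expNormalized_of_neg ht, mul_zero]
    exact mul_nonneg (Real.exp_pos u).le (expNormalized_nonneg hS0 u)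
  · simp only [hexp ht, hexp (ht.trans htu)]
    exact hS (Real.exp_le_exp.2 htu)

lemma laplace_expNormalized (S : ℝ → ℝ) (s : ℂ) :
    ∫ t : ℝ, (expNormalized S t : ℂ) * Complex.exp (-s * t) =
      ∫ x in Set.Ioi (1 : ℝ), (S x : ℂ) * (x : ℂ) ^ (-(s + 1 + 1)) := by
  have himage : Real.exp '' Set.Ioi (0 : ℝ) = Set.Ioi 1 := by
    simp
  have hsupport : ∀ t : ℝ, (expNormalized S t : ℂ) * Complex.exp (-s * t) =
      (Set.Ici 0).indicator
        (fun t : ℝ => ((Real.exp (-t) * S (Real.exp t) : ℝ) : ℂ) * Complex.exp (-s * t)) t := by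
    intro t
    by_cases ht : t ∈ Set.Ici (0 : ℝ) <;> simp [expNormalized, ht]
  simp_rw [hsupport]
  rw [integral_indicator measurableSet_Ici, integral_Ici_eq_integral_Ioi, ← himage,
    integral_image_eq_integral_abs_deriv_smul measurableSet_Ioi
      (fun x _ => (Real.hasDerivAt_exp x).hasDerivWithinAt) Real.exp_injective.injOn]
  refine setIntegral_congr_fun measurableSet_Ioi fun t _ => ?_
  have hpow : (Real.exp t : ℂ) ^ (-(s + 1 + 1)) = Complex.exp (t * -(s + 1 + 1)) := by
    rw [Complex.cpow_def_of_ne_zero (by simp), ← Complex.ofReal_log (Real.exp_pos t).le,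
      Real.log_exp]
  simp only [hpow, Real.abs_exp, Complex.real_smul]
  push_cast
  rw [mul_left_comm, ← Complex.exp_add, mul_right_comm, ← Complex.exp_add, mul_comm]
  ring_nf

end expNormalized

lemma laplace_indicator_Ici_const (κ : ℝ) {s : ℂ} (hs : 0 < s.re) :
    ∫ t : ℝ, (((Set.Ici (0 : ℝ)).indicator (fun _ => κ) t : ℝ) : ℂ) * Complex.exp (-s * t) =
      κ / s := by
  have hsupport : ∀ t : ℝ,
      (((Set.Ici (0 : ℝ)).indicator (fun _ => κ) t : ℝ) : ℂ) * Complex.exp (-s * t) =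
      (Set.Ici 0).indicator (fun t : ℝ => (κ : ℂ) * Complex.exp (-s * t)) t := by
    intro t
    by_cases ht : t ∈ Set.Ici (0 : ℝ) <;> simp [ht]
  simp_rw [hsupport]
  rw [integral_indicator measurableSet_Ici, integral_Ici_eq_integral_Ioi, integral_const_mul,
    integral_exp_mul_complex_Ioi (by simpa using hs) 0]
  simp [div_eq_mul_inv]

/-- The summatory function `x ↦ ∑_{1 ≤ m ≤ x} a m`. -/
noncomputable def summatory (a : ℕ → ℝ) (x : ℝ) : ℝ := ∑ m ∈ Finset.Icc 1 ⌊x⌋₊, a m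

lemma monotone_summatory {a : ℕ → ℝ} (ha : ∀ n, 0 ≤ a n) : Monotone (summatory a) :=
  fun _ _ hxy => Finset.sum_le_sum_of_subset_of_nonneg
    (Finset.Icc_subset_Icc le_rfl (Nat.floor_mono hxy)) fun _ _ _ => ha _

lemma laplace_expNormalized_summatory {a : ℕ → ℝ} (ha : ∀ n, 0 ≤ a n)
    (hO : (fun n : ℕ => summatory a n) =O[atTop] fun n => (n : ℝ)) {s : ℂ} (hs : 0 < s.re) :
    ∫ t : ℝ, (expNormalized (summatory a) t : ℂ) * Complex.exp (-s * t) =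
      LSeries (fun n => (a n : ℂ)) (s + 1) / (s + 1) := by
  have hs1 : s + 1 ≠ 0 := Complex.ne_zero_of_re_pos (by simpa using hs.trans (lt_add_one _))
  have hL := LSeries_eq_mul_integral_of_nonneg a (r := 1) zero_le_one (s := s + 1)
    (by simpa using hs) (by simpa [summatory] using hO) ha
  rw [hL, mul_div_cancel_left₀ _ hs1, laplace_expNormalized]
  simp only [summatory, Complex.ofReal_sum]

lemma summatory_nonneg {a : ℕ → ℝ} (ha : ∀ n, 0 ≤ a n) (x : ℝ) : 0 ≤ summatory a x :=
  Finset.sum_nonneg fun m _ => ha m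

lemma laplace_expNormalized_summatory_sub {a : ℕ → ℝ} (ha : ∀ n, 0 ≤ a n) {M : ℝ} (hM0 : 0 ≤ M)
    (hM : ∀ x : ℝ, 0 ≤ x → summatory a x ≤ M * x) (κ : ℝ) {s : ℂ} (hs : 0 < s.re) :
    ∫ t : ℝ, ((expNormalized (summatory a) t - (Set.Ici (0 : ℝ)).indicator (fun _ => κ) t : ℝ) : ℂ)
        * Complex.exp (-s * t) =
      LSeries (fun n => (a n : ℂ)) (s + 1) / (s + 1) - κ / s := by
  have hO : (fun n : ℕ => summatory a n) =O[atTop] fun n => (n : ℝ) :=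
    IsBigO.of_bound M (Eventually.of_forall fun n => by
      simpa [abs_of_nonneg (summatory_nonneg ha _)] using hM n n.cast_nonneg)
  have hmeas := measurable_expNormalized (monotone_summatory ha)
  have hind : Measurable ((Set.Ici (0 : ℝ)).indicator fun _ => κ) :=
    measurable_const.indicator measurableSet_Ici
  rw [← laplace_expNormalized_summatory ha hO hs, ← laplace_indicator_Ici_const κ hs,
    ← integral_sub]
  · simp only [Complex.ofReal_sub, sub_mul]
  · refine integrable_mul_exp_neg (by fun_prop) (M := M) (fun t => ?_)
      (fun t ht => by rw [expNormalized_of_neg ht, Complex.ofReal_zero]) hs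
    rw [Complex.norm_real, Real.norm_of_nonneg (expNormalized_nonneg (summatory_nonneg ha) t)]
    exact expNormalized_le hM0 hM t
  · refine integrable_mul_exp_neg (by fun_prop) (M := |κ|) (fun t => ?_)
      (fun t ht => by simp [ht.not_ge]) hs
    exact (Complex.norm_real _).trans_le (norm_indicator_le_norm_self (fun _ => κ) t)

theorem wienerIkehara {a : ℕ → ℝ} (ha : ∀ n, 0 ≤ a n) {M κ : ℝ}
    (hM : ∀ x : ℝ, 0 ≤ x → summatory a x ≤ M * x) {G : ℂ → ℂ}
    (hG : ContinuousOn G {s | 1 ≤ s.re})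
    (hGeq : ∀ s : ℂ, 1 < s.re → G s = LSeries (fun n => (a n : ℂ)) s - κ / (s - 1)) :
    Tendsto (fun n : ℕ => summatory a n / n) atTop (𝓝 κ) := by
  have hmono := monotone_summatory ha
  have hnonneg := summatory_nonneg ha
  have hM0 : 0 ≤ M := by simpa using (hnonneg 1).trans (hM 1 zero_le_one)
  have hlim : Tendsto (expNormalized (summatory a)) atTop (𝓝 κ) := by
    refine tendsto_of_laplace_of_monotone_exp_mul (measurable_expNormalized hmono)
      (monotone_exp_mul_expNormalized hmono hnonneg) (expNormalized_nonneg hnonneg)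
      (expNormalized_le hM0 hM) (fun t ht => expNormalized_of_neg ht)
      (H := fun s => (G (s + 1) - κ) / (s + 1)) ?_ fun s hs => ?_
    · refine ContinuousOn.div ((hG.comp (by fun_prop) fun s hs => ?_).sub continuousOn_const)
        (by fun_prop) fun s (hs : 0 ≤ s.re) => ?_
      · simpa using hs
      · exact Complex.ne_zero_of_re_pos (by simpa using hs.trans_lt (lt_add_one _))
    · have hs0 : s ≠ 0 := Complex.ne_zero_of_re_pos hs
      have hs1 : s + 1 ≠ 0 := Complex.ne_zero_of_re_pos (by simpa using hs.trans (lt_add_one _))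
      rw [laplace_expNormalized_summatory_sub ha hM0 hM κ hs, hGeq (s + 1) (by simpa using hs),
        add_sub_cancel_right]
      field_simp
      ring
  refine (hlim.comp (Real.tendsto_log_atTop.comp tendsto_natCast_atTop_atTop)).congr' ?_
  filter_upwards [eventually_ge_atTop 1] with n hn
  have hn1 : (1 : ℝ) ≤ n := Nat.one_le_cast.2 hn
  simp only [Function.comp_apply]
  rw [expNormalized_of_nonneg (Real.log_nonneg hn1), Real.exp_neg,
    Real.exp_log (zero_lt_one.trans_le hn1), div_eq_inv_mul]

end WienerIkehara

/-! ### Primes in residue classes -/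

section PrimesInResidueClasses

open Topology ArithmeticFunction

/-- The primes of `S` up to `n`. -/
noncomputable def primesUpTo (S : Set ℕ) (n : ℕ) : Finset ℕ := {p ∈ Nat.primesLE n | p ∈ S}

/-- The counting function `π_S` of the primes of `S`, with real values. -/
noncomputable def primeCount (S : Set ℕ) (n : ℕ) : ℝ := (primesUpTo S n).card

/-- Chebyshev's function `θ_S` restricted to the primes of `S`. -/
noncomputable def primeLogSum (S : Set ℕ) (n : ℕ) : ℝ := ∑ p ∈ primesUpTo S n, Real.log p

variable {S T : Set ℕ}

lemma mem_primesUpTo {n p : ℕ} : p ∈ primesUpTo S n ↔ p ≤ n ∧ p.Prime ∧ p ∈ S := by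
  rw [primesUpTo, Finset.mem_filter, Nat.mem_primesLE, and_assoc]

lemma primesUpTo_subset_of_subset (hST : S ⊆ T) (n : ℕ) : primesUpTo S n ⊆ primesUpTo T n :=
  Finset.monotone_filter_right _ fun _ _ hp => hST hp

lemma tendsto_summatory_residueClass_div {q : ℕ} [NeZero q] {a : ZMod q} (ha : IsUnit a) :
    Tendsto (fun n : ℕ => summatory (vonMangoldt.residueClass a) n / n) atTop
      (𝓝 (q.totient : ℝ)⁻¹) := by
  refine wienerIkehara (vonMangoldt.residueClass_nonneg a) (M := Real.log 4 + 4) (fun x hx => ?_)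
    (vonMangoldt.continuousOn_LFunctionResidueClassAux a) fun s hs => ?_
  · exact (Finset.sum_le_sum fun k _ => vonMangoldt.residueClass_le a k).trans
      (Chebyshev.psi_le_const_mul_self hx)
  · rw [vonMangoldt.eqOn_LFunctionResidueClassAux ha hs]
    simp

lemma tendsto_summatory_indicator_vonMangoldt_div {q : ℕ} [NeZero q] (U : Finset (ZMod q)ˣ) :
    Tendsto (fun n : ℕ => summatory ({m : ℕ | ∃ u ∈ U, (m : ZMod q) = u}.indicator Λ) n / n) atTop
      (𝓝 (U.card / q.totient)) := by
  have hsum : Tendsto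
      (fun n : ℕ => ∑ u ∈ U, summatory (vonMangoldt.residueClass (u : ZMod q)) n / n)
      atTop (𝓝 (∑ _u ∈ U, (q.totient : ℝ)⁻¹)) :=
    tendsto_finsetSum _ fun u _ => tendsto_summatory_residueClass_div u.isUnit
  rw [Finset.sum_const, nsmul_eq_mul, ← div_eq_mul_inv] at hsum
  refine hsum.congr fun n => ?_
  rw [← Finset.sum_div]
  congr 1
  simp only [summatory]
  rw [Finset.sum_comm]
  refine Finset.sum_congr rfl fun m _ => ?_
  have hunion : {m : ℕ | ∃ u ∈ U, (m : ZMod q) = u} = ⋃ u ∈ U, {m : ℕ | (m : ZMod q) = u} := by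
    ext; simp
  have hdisjoint : (U : Set (ZMod q)ˣ).PairwiseDisjoint fun u => {m : ℕ | (m : ZMod q) = u} :=
    fun u _ v _ huv => Set.disjoint_left.2 fun m hu hv => huv (Units.ext (hu.symm.trans hv))
  rw [hunion, Finset.indicator_biUnion_apply U _ hdisjoint]

lemma summatory_indicator_vonMangoldt_sub_primeLogSum (S : Set ℕ) (n : ℕ) :
    summatory (S.indicator Λ) n - primeLogSum S n =
      ∑ m ∈ Finset.Ioc 0 n with ¬ m.Prime, S.indicator Λ m := by
  have hprimes : primeLogSum S n = ∑ m ∈ Finset.Ioc 0 n with m.Prime, S.indicator Λ m := by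
    rw [primeLogSum, primesUpTo, Finset.sum_filter, Nat.primesLE_eq_filter_Ioc_zero]
    refine Finset.sum_congr rfl fun p hp => ?_
    rw [Set.indicator_apply, vonMangoldt_apply_prime (Finset.mem_filter.1 hp).2]
  rw [hprimes, sub_eq_iff_eq_add', Finset.sum_filter_add_sum_filter_not, summatory,
    Nat.floor_natCast]
  rfl

lemma isLittleO_div_of_tendsto_atTop {f : ℝ → ℝ} (hf : Tendsto f atTop atTop) :
    (fun x => x / f x) =o[atTop] fun x => x := by
  simpa [div_eq_mul_inv] using (isBigO_refl (fun x : ℝ => x) atTop).mul_isLittleO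
    ((isLittleO_one_iff ℝ).2 hf.inv_tendsto_atTop)

lemma isLittleO_summatory_indicator_vonMangoldt_sub_primeLogSum (S : Set ℕ) :
    (fun n : ℕ => summatory (S.indicator Λ) n - primeLogSum S n) =o[atTop] fun n => (n : ℝ) := by
  have hsqrt : Real.sqrt =o[atTop] fun x : ℝ => x := by
    simpa only [Real.div_sqrt] using isLittleO_div_of_tendsto_atTop Real.tendsto_sqrt_atTop
  have hpsi : (fun n : ℕ => Chebyshev.psi n - Chebyshev.theta n) =o[atTop] fun n => (n : ℝ) :=
    (Chebyshev.isBigO_psi_sub_theta_sqrt.trans_isLittleO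
      hsqrt).comp_tendsto tendsto_natCast_atTop_atTop
  refine (IsBigO.of_norm_le fun n => ?_).trans_isLittleO hpsi
  rw [summatory_indicator_vonMangoldt_sub_primeLogSum, Real.norm_of_nonneg (Finset.sum_nonneg
    fun m _ => Set.indicator_nonneg (fun _ _ => vonMangoldt_nonneg) m),
    Chebyshev.psi_sub_theta_eq_sum_not_prime, Nat.floor_natCast]
  exact Finset.sum_le_sum fun m _ => Set.indicator_le_self' (fun _ _ => vonMangoldt_nonneg) m

lemma primeCount_mul_log_sub_primeLogSum (S : Set ℕ) (n : ℕ) :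
    primeCount S n * Real.log n - primeLogSum S n =
      ∑ p ∈ primesUpTo S n, (Real.log n - Real.log p) := by
  rw [Finset.sum_sub_distrib, Finset.sum_const, nsmul_eq_mul, primeCount, primeLogSum]

lemma isLittleO_primeCount_univ_mul_log_sub_primeLogSum :
    (fun n : ℕ => primeCount .univ n * Real.log n - primeLogSum .univ n) =o[atTop]
      fun n => (n : ℝ) := by
  have hlog : ∀ᶠ x : ℝ in atTop, Real.log x ≠ 0 :=
    Real.tendsto_log_atTop.eventually_ne_atTop 0
  have hmul := Chebyshev.primeCounting_sub_theta_div_log_isBigO.mul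
    (isBigO_refl Real.log atTop)
  have hx : (fun x : ℝ => Nat.primeCounting ⌊x⌋₊ * Real.log x - Chebyshev.theta x) =o[atTop]
      fun x => x := by
    refine (hmul.congr' ?_ ?_).trans_isLittleO
      (isLittleO_div_of_tendsto_atTop Real.tendsto_log_atTop)
    · filter_upwards [hlog] with x hx
      field_simp
    · filter_upwards [hlog] with x hx
      field_simp
  refine (hx.comp_tendsto tendsto_natCast_atTop_atTop).congr_left fun n => ?_
  simp [primeCount, primeLogSum, primesUpTo, Nat.primesLE_card_eq_primeCounting,
    Chebyshev.theta_eq_sum_primesLE_log]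

lemma isLittleO_primeCount_mul_log_sub_primeLogSum (S : Set ℕ) :
    (fun n : ℕ => primeCount S n * Real.log n - primeLogSum S n) =o[atTop] fun n => (n : ℝ) := by
  have hterm (n p : ℕ) (hp : p ∈ primesUpTo .univ n) : 0 ≤ Real.log n - Real.log p := by
    obtain ⟨hpn, hprime, -⟩ := mem_primesUpTo.1 hp
    exact sub_nonneg.2 (Real.log_le_log (mod_cast hprime.pos) (mod_cast hpn))
  have hsub := primesUpTo_subset_of_subset S.subset_univ
  refine (IsBigO.of_norm_le fun n => ?_).trans_isLittleO
    isLittleO_primeCount_univ_mul_log_sub_primeLogSum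
  rw [primeCount_mul_log_sub_primeLogSum, primeCount_mul_log_sub_primeLogSum,
    Real.norm_of_nonneg (Finset.sum_nonneg fun p hp => hterm n p (hsub n hp))]
  exact Finset.sum_le_sum_of_subset_of_nonneg (hsub n) fun p hp _ => hterm n p hp

theorem tendsto_primeCount_mul_log_div {q : ℕ} [NeZero q] (U : Finset (ZMod q)ˣ) :
    Tendsto (fun n : ℕ => primeCount {m : ℕ | ∃ u ∈ U, (m : ZMod q) = u} n * Real.log n / n) atTop
      (𝓝 (U.card / q.totient)) := by
  set S := {m : ℕ | ∃ u ∈ U, (m : ZMod q) = u}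
  have hlim := ((tendsto_summatory_indicator_vonMangoldt_div U).sub
    (isLittleO_summatory_indicator_vonMangoldt_sub_primeLogSum S).tendsto_div_nhds_zero).add
    (isLittleO_primeCount_mul_log_sub_primeLogSum S).tendsto_div_nhds_zero
  rw [sub_zero, add_zero] at hlim
  refine hlim.congr fun n => ?_
  ring

end PrimesInResidueClasses

section RelativeDensity

open Topology

/-- The primes of `S` have density `δ` relative to the set of all primes. -/
def HasRelativePrimeDensity (S : Set ℕ) (δ : ℝ) : Prop :=
  Tendsto (fun n => primeCount S n / primeCount .univ n) atTop (𝓝 δ)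

theorem tendsto_primeCount_univ_mul_log_div :
    Tendsto (fun n : ℕ => primeCount .univ n * Real.log n / n) atTop (𝓝 1) := by
  have h := tendsto_primeCount_mul_log_div (q := 1) Finset.univ
  have hclasses : {m : ℕ | ∃ u ∈ (Finset.univ : Finset (ZMod 1)ˣ), (m : ZMod 1) = u} = .univ :=
    Set.eq_univ_of_forall fun m => ⟨1, Finset.mem_univ 1, Subsingleton.elim _ _⟩
  rw [hclasses, Finset.card_univ, ZMod.card_units_eq_totient, Nat.totient_one, Nat.cast_one,
    div_one] at h
  exact h

theorem hasRelativePrimeDensity_residueClasses {q : ℕ} [NeZero q] (U : Finset (ZMod q)ˣ) :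
    HasRelativePrimeDensity {m | ∃ u ∈ U, (m : ZMod q) = u} (U.card / q.totient) := by
  have h := (tendsto_primeCount_mul_log_div U).div tendsto_primeCount_univ_mul_log_div one_ne_zero
  rw [div_one] at h
  refine h.congr' ?_
  filter_upwards [eventually_gt_atTop 1] with n hn
  have hlog : Real.log n ≠ 0 := (Real.log_pos (Nat.one_lt_cast.2 hn)).ne'
  have hn0 : (n : ℝ) ≠ 0 := Nat.cast_ne_zero.2 (by lia)
  rw [Pi.div_apply, div_div_div_cancel_right₀ hn0, mul_div_mul_right _ _ hlog]

end RelativeDensity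

/-! ### Primes with prescribed Jacobi symbol -/

section JacobiSymbol

open scoped NumberTheorySymbols

lemma jacobiSym_eq_one_of_modEq_one {M : ℤ} {n : ℕ} (hM : M ≠ 0) (hn : Odd n)
    (hmod : n ≡ 1 [MOD 4 * M.natAbs]) : J(M | n) = 1 := by
  rw [jacobiSym.mod_right M hn, hmod, Nat.mod_eq_of_lt (by lia), jacobiSym.one_right]

lemma exists_modEq_one_jacobiSym_prime_eq_neg_one {p : ℕ} (hp : p.Prime) {M : ℤ}
    (hpM : ¬ (p : ℤ) ∣ M) : ∃ n : ℕ, Odd n ∧ n ≡ 1 [MOD 4 * M.natAbs] ∧ J(p | n) = -1 := by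
  have hpM' : ¬ p ∣ M.natAbs := by rwa [← Int.natCast_dvd]
  rcases eq_or_ne p 2 with rfl | hp2
  · have hn : Odd (4 * M.natAbs + 1) := ⟨2 * M.natAbs, by lia⟩
    refine ⟨4 * M.natAbs + 1, hn, Nat.add_mod_left _ _, ?_⟩
    rw [Nat.cast_ofNat, jacobiSym.at_two hn, ZMod.χ₈_nat_eq_if_mod_eight, if_neg (by lia),
      if_neg (by lia)]
  · have := Fact.mk hp
    have hpodd : Odd p := hp.odd_of_ne_two hp2
    obtain ⟨u, hu⟩ : ∃ u : ZMod p, quadraticChar (ZMod p) u = -1 :=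
      quadraticChar_exists_neg_one (by rwa [ZMod.ringChar_zmod_n])
    have hcoprime : Nat.Coprime (4 * M.natAbs) p :=
      .mul_left (.pow_left 2 (Nat.coprime_two_left.2 hpodd)) (hp.coprime_iff_not_dvd.2 hpM').symm
    obtain ⟨n, hn1, hnu⟩ := Nat.chineseRemainder hcoprime 1 u.val
    have hn4 : n % 4 = 1 := hn1.of_mul_right M.natAbs
    refine ⟨n, Nat.odd_iff.2 (by lia), hn1, ?_⟩
    have hcast : ((n : ℤ) : ZMod p) = u := by
      rw [Int.cast_natCast, (ZMod.natCast_eq_natCast_iff _ _ _).2 hnu, ZMod.natCast_zmod_val]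
    rw [jacobiSym.quadratic_reciprocity_one_mod_four' hpodd hn4,
      ← jacobiSym.legendreSym.to_jacobiSym, legendreSym, hcast, hu]

lemma exists_jacobiSym_pow_mul_eq_neg_one {p : ℕ} (hp : p.Prime) {M : ℤ} (hpM : ¬ (p : ℤ) ∣ M)
    {f : ℕ} (hf : Odd f) : ∃ n : ℕ, Odd n ∧ J(p ^ f * M | n) = -1 := by
  have hM : M ≠ 0 := by rintro rfl; exact hpM (dvd_zero _)
  obtain ⟨n, hn, hn1, hnp⟩ := exists_modEq_one_jacobiSym_prime_eq_neg_one hp hpM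
  refine ⟨n, hn, ?_⟩
  rw [jacobiSym.mul_left, jacobiSym.pow_left, hnp, jacobiSym_eq_one_of_modEq_one hM hn hn1,
    hf.neg_one_pow, mul_one]

lemma exists_jacobiSym_neg_sq_eq_neg_one {t : ℕ} (ht : t ≠ 0) :
    ∃ n : ℕ, Odd n ∧ J(-(t : ℤ) ^ 2 | n) = -1 := by
  have hn : Odd (4 * t - 1) := by rw [Nat.odd_iff]; lia
  have hcoprime : Nat.Coprime t (4 * t - 1) := by
    have h : Nat.Coprime (4 * t) (4 * t - 1) :=
      Nat.coprime_self_sub_right (by lia) |>.2 (Nat.coprime_one_right _)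
    exact h.coprime_dvd_left (Dvd.intro_left 4 rfl)
  refine ⟨4 * t - 1, hn, ?_⟩
  rw [jacobiSym.neg _ hn, jacobiSym.sq_one' (by rwa [Int.gcd_natCast_natCast]), mul_one,
    ZMod.χ₄_nat_eq_if_mod_four, if_neg (by lia), if_neg (by lia)]

theorem exists_jacobiSym_eq_neg_one {D : ℤ} (hD : ¬ IsSquare D) :
    ∃ n : ℕ, Odd n ∧ J(D | n) = -1 := by
  obtain ⟨a, t, hat, ha⟩ := Nat.sq_mul_squarefree D.natAbs
  have hD0 : D ≠ 0 := by rintro rfl; exact hD (IsSquare.zero)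
  have ht0 : t ≠ 0 := by rintro rfl; simp [eq_comm, hD0] at hat
  rcases eq_or_ne a 1 with rfl | ha1
  · have hneg : D = -(t : ℤ) ^ 2 := by
      rcases Int.natAbs_eq D with h | h
      · exact absurd ⟨(t : ℤ), by rw [h, ← hat]; push_cast; ring⟩ hD
      · rw [h, ← hat]; push_cast; ring
    exact hneg ▸ exists_jacobiSym_neg_sq_eq_neg_one ht0
  · obtain ⟨p, hp, m, rfl⟩ := Nat.exists_prime_and_dvd ha1
    obtain ⟨g, r, hpr, rfl⟩ := Nat.exists_eq_pow_mul_and_not_dvd ht0 p hp.ne_one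
    have hpm : ¬ p ∣ m := fun h => hp.one_lt.ne' (Nat.isUnit_iff.1 (ha p (mul_dvd_mul_left p h)))
    have hpM : ¬ (p : ℤ) ∣ D.sign * (r ^ 2 * m : ℕ) := by
      rw [Int.natCast_dvd, Int.natAbs_mul, Int.natAbs_sign_of_ne_zero hD0, one_mul,
        Int.natAbs_natCast, hp.dvd_mul]
      exact not_or_intro (fun h => hpr (hp.dvd_of_dvd_pow h)) hpm
    have hDeq : D = p ^ (2 * g + 1) * (D.sign * (r ^ 2 * m : ℕ)) := by
      conv_lhs => rw [← Int.sign_mul_natAbs D, ← hat]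
      push_cast
      ring
    rw [hDeq]
    exact exists_jacobiSym_pow_mul_eq_neg_one hp hpM (odd_two_mul_add_one g)

lemma isUnit_natCast_iff_gcd_two_mul_eq_one {D : ℤ} {n : ℕ} :
    IsUnit (n : ZMod (4 * D.natAbs)) ↔ Int.gcd n (2 * D) = 1 := by
  rw [ZMod.isUnit_iff_coprime, Int.gcd, Int.natAbs_mul, Int.natAbs_natCast,
    ← Nat.coprime_iff_gcd_eq_one, Nat.coprime_mul_iff_right, Nat.coprime_mul_iff_right]
  exact and_congr_left' (Nat.coprime_pow_right_iff (n := 2) two_pos n 2)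

lemma odd_val_unit {D : ℤ} (u : (ZMod (4 * D.natAbs))ˣ) : Odd (u : ZMod (4 * D.natAbs)).val :=
  Nat.coprime_two_right.1 ((ZMod.val_coe_unit_coprime u).coprime_dvd_right ⟨2 * D.natAbs, by ring⟩)

/-- The quadratic character `n ↦ J(D | n)` modulo `4 |D|`. -/
def jacobiChar (D : ℤ) : (ZMod (4 * D.natAbs))ˣ →* ℤ where
  toFun u := J(D | (u : ZMod (4 * D.natAbs)).val)
  map_one' := by rw [Units.val_one, ZMod.val_one'' (by lia), jacobiSym.one_right]
  map_mul' u v := by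
    have hu := odd_val_unit u
    have hv := odd_val_unit v
    rw [Units.val_mul, ZMod.val_mul, ← jacobiSym.mod_right D (hu.mul hv),
      jacobiSym.mul_right' D hu.pos.ne' hv.pos.ne']

lemma jacobiChar_eq {D : ℤ} {n : ℕ} (hn : Odd n) {u : (ZMod (4 * D.natAbs))ˣ}
    (hu : (n : ZMod (4 * D.natAbs)) = u) : jacobiChar D u = J(D | n) := by
  change J(D | (u : ZMod (4 * D.natAbs)).val) = _
  rw [← hu, ZMod.val_natCast, ← jacobiSym.mod_right D hn]

lemma odd_of_gcd_two_mul_eq_one {D : ℤ} {n : ℕ} (h : Int.gcd n (2 * D) = 1) : Odd n :=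
  Nat.coprime_two_right.1 (Nat.Coprime.coprime_dvd_right (by simp [Int.natAbs_mul]) h)

lemma jacobiChar_eq_one_or_neg_one {D : ℤ} (u : (ZMod (4 * D.natAbs))ˣ) :
    jacobiChar D u = 1 ∨ jacobiChar D u = -1 := by
  refine jacobiSym.eq_one_or_neg_one ?_
  rw [Int.gcd, Nat.gcd_comm]
  exact (ZMod.val_coe_unit_coprime u).coprime_dvd_right (Dvd.intro_left 4 rfl)

lemma jacobiChar_ne_one {D : ℤ} (hD : ¬ IsSquare D) : jacobiChar D ≠ 1 := by
  obtain ⟨n, hn, hJ⟩ := exists_jacobiSym_eq_neg_one hD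
  have := NeZero.mk hn.pos.ne'
  have hcoprime : D.gcd n = 1 := not_not.1 fun h =>
    absurd (hJ.symm.trans (jacobiSym.eq_zero_iff_not_coprime.2 h)) (by simp)
  have hunit : IsUnit (n : ZMod (4 * D.natAbs)) := by
    rw [isUnit_natCast_iff_gcd_two_mul_eq_one, Int.gcd, Int.natAbs_mul]
    exact (Nat.coprime_two_right.2 hn).mul_right (Nat.coprime_comm.1 hcoprime)
  intro h
  have hone := jacobiChar_eq hn hunit.unit_spec.symm
  rw [h, hJ, MonoidHom.one_apply] at hone
  simp at hone

lemma card_jacobiChar_eq_one_div_totient {D : ℤ} (hD : ¬ IsSquare D) [NeZero (4 * D.natAbs)] :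
    (Finset.card {u | jacobiChar D u = 1} : ℝ) / (4 * D.natAbs).totient = 1 / 2 := by
  have hvalue (u) : jacobiChar D u = 2 * (if jacobiChar D u = 1 then 1 else 0) - 1 := by
    rcases jacobiChar_eq_one_or_neg_one u with h | h <;> simp [h]
  have hsum := sum_hom_units_eq_zero (jacobiChar D) (jacobiChar_ne_one hD)
  rw [Finset.sum_congr rfl fun u _ => hvalue u, Finset.sum_sub_distrib, ← Finset.mul_sum,
    Finset.sum_boole, Finset.sum_const, Finset.card_univ, ZMod.card_units_eq_totient, nsmul_one,
    sub_eq_zero] at hsum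
  have htotient : ((4 * D.natAbs).totient : ℝ) =
      2 * (Finset.card {u | jacobiChar D u = 1} : ℝ) := by
    exact_mod_cast hsum.symm
  have hpos : (0 : ℝ) < (4 * D.natAbs).totient := Nat.cast_pos.2 (Nat.totient_pos.2 (NeZero.pos _))
  rw [div_eq_iff hpos.ne', htotient]
  ring

/-- The odd primes not dividing `D` that split in `ℚ(√D)`. -/
def splitPrimes (D : ℤ) : Set ℕ := {p | p.Prime ∧ Int.gcd p (2 * D) = 1 ∧ J(D | p) = 1}

theorem hasRelativePrimeDensity_splitPrimes {D : ℤ} (hD : ¬ IsSquare D) :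
    HasRelativePrimeDensity (splitPrimes D) (1 / 2) := by
  have : NeZero (4 * D.natAbs) := ⟨by
    have hD0 : D ≠ 0 := by rintro rfl; exact hD IsSquare.zero
    lia⟩
  have hprimes (n : ℕ) : primesUpTo (splitPrimes D) n = primesUpTo
      {m | ∃ u ∈ ({u | jacobiChar D u = 1} : Finset _), (m : ZMod (4 * D.natAbs)) = u} n := by
    ext p
    simp only [mem_primesUpTo]
    refine and_congr_right fun _ => and_congr_right fun hp =>
      ⟨fun ⟨_, hgcd, hJ⟩ => ?_, fun ⟨u, hu, hpu⟩ => ⟨hp, ?_⟩⟩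
    · have hunit := isUnit_natCast_iff_gcd_two_mul_eq_one.2 hgcd
      refine ⟨hunit.unit, ?_, hunit.unit_spec.symm⟩
      simpa using (jacobiChar_eq (odd_of_gcd_two_mul_eq_one hgcd) hunit.unit_spec.symm).trans hJ
    · have hgcd := isUnit_natCast_iff_gcd_two_mul_eq_one.1 (hpu ▸ u.isUnit)
      refine ⟨hgcd, ?_⟩
      simpa [jacobiChar_eq (odd_of_gcd_two_mul_eq_one hgcd) hpu] using hu
  have h := hasRelativePrimeDensity_residueClasses {u : (ZMod (4 * D.natAbs))ˣ | jacobiChar D u = 1}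
  rw [card_jacobiChar_eq_one_div_totient hD] at h
  simpa only [HasRelativePrimeDensity, primeCount, hprimes] using h

end JacobiSymbol

/-! ### Roots of a polynomial modulo squarefree integers -/

section RootCounts

open Polynomial
open scoped NumberTheorySymbols

/-- The number of roots of `f` modulo `n`. -/
noncomputable def rootCount (f : ℤ[X]) (n : ℕ) : ℕ := Nat.card {r : ZMod n // aeval r f = 0}

lemma rootCount_one (f : ℤ[X]) : rootCount f 1 = 1 := by
  have : Unique {r : ZMod 1 // aeval r f = 0} :=
    ⟨⟨0, Subsingleton.elim _ _⟩, fun _ => Subsingleton.elim _ _⟩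
  exact Nat.card_unique

lemma rootCount_mul (f : ℤ[X]) {m n : ℕ} (hmn : m.Coprime n) :
    rootCount f (m * n) = rootCount f m * rootCount f n := by
  let e := ZMod.chineseRemainder hmn
  have hroot (r : ZMod (m * n)) :
      aeval r f = 0 ↔ aeval (e r).1 f = 0 ∧ aeval (e r).2 f = 0 := by
    have hfst := aeval_algHom_apply ((RingHom.fst _ _).comp e.toRingHom).toIntAlgHom r f
    have hsnd := aeval_algHom_apply ((RingHom.snd _ _).comp e.toRingHom).toIntAlgHom r f
    rw [← map_eq_zero_iff e e.injective, Prod.ext_iff]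
    exact and_congr (by rw [← show aeval (e r).1 f = (e (aeval r f)).1 from hfst]; rfl)
      (by rw [← show aeval (e r).2 f = (e (aeval r f)).2 from hsnd]; rfl)
  rw [rootCount, rootCount, rootCount, ← Nat.card_prod]
  exact Nat.card_congr ((e.toEquiv.subtypeEquiv hroot).trans
    (Equiv.subtypeProdEquivProd (p := fun s : ZMod m => aeval s f = 0)
      (q := fun s : ZMod n => aeval s f = 0)))

lemma rootCount_of_squarefree (f : ℤ[X]) {n : ℕ} (hn : Squarefree n) :
    rootCount f n = ∏ p ∈ n.primeFactors, rootCount f p := by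
  rw [Nat.multiplicative_factorization (rootCount f) (fun _ _ => rootCount_mul f)
    (rootCount_one f) hn.ne_zero]
  refine Finset.prod_congr rfl fun p hp => ?_
  simp only [Nat.factorization_eq_one_of_squarefree hn (Nat.prime_of_mem_primeFactors hp)
    (Nat.dvd_of_mem_primeFactors hp), pow_one]

lemma card_quadratic_roots {K : Type*} [Field K] [NeZero (2 : K)] {b c : K}
    (hdiscrim : discrim 1 b c ≠ 0) :
    Nat.card {x : K // x ^ 2 + b * x + c = 0} = if IsSquare (discrim 1 b c) then 2 else 0 := by
  have heq (x : K) : x ^ 2 + b * x + c = 1 * (x * x) + b * x + c := by ring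
  simp_rw [heq]
  split_ifs with hsq
  · obtain ⟨s, hs⟩ := hsq
    simp_rw [quadratic_eq_zero_iff one_ne_zero hs]
    have hs0 : s ≠ 0 := by rintro rfl; simp [hs] at hdiscrim
    have hne : (-b + s) / (2 * 1) ≠ (-b - s) / (2 * 1) := by
      intro h
      have h2 : (2 : K) ≠ 0 := two_ne_zero
      field_simp at h
      exact mul_ne_zero h2 hs0 (by linear_combination h)
    exact Set.ncard_pair hne
  · have : IsEmpty {x : K // 1 * (x * x) + b * x + c = 0} :=
      ⟨fun x => quadratic_ne_zero_of_discrim_ne_sq (fun s hs => hsq ⟨s, by rw [hs, sq]⟩) x.1 x.2⟩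
    exact Nat.card_of_isEmpty

variable {b c : ℤ}

lemma rootCount_quadratic (n : ℕ) : rootCount (X ^ 2 + C b * X + C c) n =
    Nat.card {r : ZMod n // r ^ 2 + b * r + c = 0} := by
  simp [rootCount]

lemma rootCount_quadratic_prime {p : ℕ} (hp : p.Prime)
    (hgcd : Int.gcd p (2 * discrim 1 b c) = 1) :
    rootCount (X ^ 2 + C b * X + C c) p = if J(discrim 1 b c | p) = 1 then 2 else 0 := by
  have := Fact.mk hp
  have hcast {a : ℤ} (ha : a ∣ 2 * discrim 1 b c) : (a : ZMod p) ≠ 0 := by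
    rw [Ne, ZMod.intCast_zmod_eq_zero_iff_dvd]
    intro h
    have hunit := (Int.isCoprime_iff_gcd_eq_one.2 hgcd).isUnit_of_dvd' dvd_rfl (h.trans ha)
    exact hp.not_isUnit (Int.ofNat_isUnit.1 hunit)
  have : NeZero (2 : ZMod p) := ⟨by simpa using hcast (dvd_mul_right 2 _)⟩
  have hD := hcast (dvd_mul_left (discrim 1 b c) 2)
  have hdiscrim : ((discrim 1 b c : ℤ) : ZMod p) = discrim 1 (b : ZMod p) c := by
    simp [discrim]
  simp only [rootCount_quadratic, ← jacobiSym.legendreSym.to_jacobiSym, ← hdiscrim,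
    card_quadratic_roots (hdiscrim ▸ hD), legendreSym.eq_one_iff p hD]

lemma gcd_eq_one_iff_forall_primeFactors {n : ℕ} (hn : Squarefree n) (m : ℤ) :
    Int.gcd n m = 1 ↔ ∀ p ∈ n.primeFactors, Int.gcd p m = 1 := by
  change Nat.Coprime n m.natAbs ↔ ∀ p ∈ n.primeFactors, Nat.Coprime p m.natAbs
  rw [← Nat.coprime_prod_left_iff, Nat.prod_primeFactors_of_squarefree hn]

theorem rootCount_quadratic_eq_two_pow_iff {n : ℕ} (hn : Squarefree n) :
    (Int.gcd n (2 * discrim 1 b c) = 1 ∧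
      rootCount (X ^ 2 + C b * X + C c) n = 2 ^ n.primeFactors.card) ↔
      ∀ p ∈ n.primeFactors, p ∈ splitPrimes (discrim 1 b c) := by
  have hprime {p : ℕ} (hp : p ∈ n.primeFactors) := Nat.prime_of_mem_primeFactors hp
  rw [gcd_eq_one_iff_forall_primeFactors hn, rootCount_of_squarefree _ hn]
  refine ⟨fun ⟨hgcd, hcard⟩ p hp => ⟨hprime hp, hgcd p hp, ?_⟩,
    fun h => ⟨fun p hp => (h p hp).2.1, ?_⟩⟩
  · by_contra hJ
    have hzero : rootCount (X ^ 2 + C b * X + C c) p = 0 := by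
      rw [rootCount_quadratic_prime (hprime hp) (hgcd p hp), if_neg hJ]
    rw [Finset.prod_eq_zero hp hzero] at hcard
    exact pow_ne_zero _ two_ne_zero hcard.symm
  · refine Finset.prod_eq_pow_card fun p hp => ?_
    rw [rootCount_quadratic_prime (hprime hp) (h p hp).2.1, if_pos (h p hp).2.2]

end RootCounts

/-! ### Squarefree integers with a given number of prime factors -/

section SquarefreeCounts

/-- The squarefree integers up to `x` with exactly `k` prime factors, all of them in `S`. -/
noncomputable def squarefreeUpTo (S : Set ℕ) (k x : ℕ) : Finset ℕ :=
  {n ∈ Finset.range (x + 1) | Squarefree n ∧ n.primeFactors.card = k ∧ ∀ p ∈ n.primeFactors, p ∈ S}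

/-- The counting function of the squarefree integers with exactly `k` prime factors, all of them
in `S`, with real values. -/
noncomputable def squarefreeCount (S : Set ℕ) (k x : ℕ) : ℝ := (squarefreeUpTo S k x).card

/-- The number of pairs `(p, m)` with `p * m ≤ x`, where `p` is a prime of `P` and `m` is squarefree
with exactly `k` prime factors, all of them in `Q`. -/
noncomputable def pairCount (P Q : Set ℕ) (k x : ℕ) : ℝ :=
  ∑ p ∈ primesUpTo P x, squarefreeCount Q k (x / p)

variable {P Q S : Set ℕ} {k x y : ℕ}

lemma mem_squarefreeUpTo {n : ℕ} : n ∈ squarefreeUpTo S k x ↔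
    n ≤ x ∧ Squarefree n ∧ n.primeFactors.card = k ∧ ∀ p ∈ n.primeFactors, p ∈ S := by
  rw [squarefreeUpTo, Finset.mem_filter, Finset.mem_range, Nat.lt_succ_iff]

lemma mem_squarefreeUpTo_univ {n : ℕ} :
    n ∈ squarefreeUpTo .univ k x ↔ n ≤ x ∧ Squarefree n ∧ n.primeFactors.card = k := by
  simp [mem_squarefreeUpTo]

lemma squarefreeUpTo_subset_univ (S : Set ℕ) (k x : ℕ) :
    squarefreeUpTo S k x ⊆ squarefreeUpTo .univ k x := fun _ hn =>
  have ⟨hnx, hsq, hcard, _⟩ := mem_squarefreeUpTo.1 hn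
  mem_squarefreeUpTo_univ.2 ⟨hnx, hsq, hcard⟩

lemma squarefreeUpTo_subset_of_le (hxy : x ≤ y) : squarefreeUpTo S k x ⊆ squarefreeUpTo S k y :=
  fun _ hn => have ⟨hnx, h⟩ := mem_squarefreeUpTo.1 hn
    mem_squarefreeUpTo.2 ⟨hnx.trans hxy, h⟩

lemma squarefreeCount_nonneg (S : Set ℕ) (k x : ℕ) : 0 ≤ squarefreeCount S k x := Nat.cast_nonneg _

lemma squarefreeCount_le_univ (S : Set ℕ) (k x : ℕ) :
    squarefreeCount S k x ≤ squarefreeCount .univ k x :=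
  Nat.cast_le.2 (Finset.card_le_card (squarefreeUpTo_subset_univ S k x))

lemma squarefreeCount_mono (S : Set ℕ) (k : ℕ) : Monotone (squarefreeCount S k) := fun _ _ hxy =>
  Nat.cast_le.2 (Finset.card_le_card (squarefreeUpTo_subset_of_le hxy))

lemma squarefree_and_card_primeFactors_eq_one_iff {n : ℕ} :
    Squarefree n ∧ n.primeFactors.card = 1 ↔ n.Prime := by
  refine ⟨fun ⟨hsq, hcard⟩ => ?_, fun hn => ⟨hn.prime.squarefree, by simp [hn.primeFactors]⟩⟩
  obtain ⟨p, hp⟩ := Finset.card_eq_one.1 hcard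
  have hnp : n = p := by
    rw [← Nat.prod_primeFactors_of_squarefree hsq, hp, Finset.prod_singleton]
  exact hnp ▸ Nat.prime_of_mem_primeFactors (hp ▸ Finset.mem_singleton_self p)

lemma squarefreeCount_one (S : Set ℕ) : squarefreeCount S 1 = primeCount S := by
  funext x
  rw [squarefreeCount, primeCount]
  congr 2
  ext n
  rw [mem_squarefreeUpTo, mem_primesUpTo, ← and_assoc (a := Squarefree n),
    squarefree_and_card_primeFactors_eq_one_iff]
  exact and_congr_right fun _ => and_congr_right fun hn => by simp [hn.primeFactors]

lemma pairCount_eq_sum_primeCount (P Q : Set ℕ) (k : ℕ) (hxy : x ≤ y) :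
    pairCount P Q k x = ∑ m ∈ squarefreeUpTo Q k y, primeCount P (x / m) := by
  simp only [pairCount, squarefreeCount, primeCount, Finset.cast_card]
  refine Finset.sum_comm' fun p m => ?_
  simp only [mem_primesUpTo, mem_squarefreeUpTo]
  constructor
  · rintro ⟨⟨-, hp, hpP⟩, hmx, hm⟩
    have hmul : m * p ≤ x := (Nat.le_div_iff_mul_le hp.pos).1 hmx
    exact ⟨⟨(Nat.le_div_iff_mul_le hm.1.ne_zero.bot_lt).2 (mul_comm m p ▸ hmul), hp, hpP⟩,
      (Nat.le_mul_of_pos_right m hp.pos).trans (hmul.trans hxy), hm⟩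
  · rintro ⟨⟨hpx, hp, hpP⟩, -, hm⟩
    have hmul : p * m ≤ x := (Nat.le_div_iff_mul_le hm.1.ne_zero.bot_lt).1 hpx
    exact ⟨⟨hpx.trans (Nat.div_le_self _ _), hp, hpP⟩,
      (Nat.le_div_iff_mul_le hp.pos).2 (mul_comm p m ▸ hmul), hm⟩

lemma prime_mul_mem_squarefreeUpTo_succ {p m : ℕ} (hp : p.Prime) (hpS : p ∈ S) :
    p * m ∈ squarefreeUpTo S (k + 1) x ↔ m ∈ squarefreeUpTo S k (x / p) ∧ ¬ p ∣ m := by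
  rw [mem_squarefreeUpTo, mem_squarefreeUpTo, Nat.squarefree_mul_iff, Nat.le_div_iff_mul_le hp.pos,
    mul_comm m p, ← hp.coprime_iff_not_dvd]
  by_cases hpm : p.Coprime m
  · have hpmem : p ∉ m.primeFactors := fun h =>
      hp.coprime_iff_not_dvd.1 hpm (Nat.dvd_of_mem_primeFactors h)
    rw [hpm.primeFactors_mul, hp.primeFactors, Finset.singleton_union,
      Finset.card_insert_of_notMem hpmem, Finset.forall_mem_insert]
    simp only [hpS, hp.prime.squarefree, true_and, Nat.add_left_inj]
    tauto
  · simp [hpm]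

lemma card_filter_dvd_squarefreeUpTo_succ {p : ℕ} (hp : p.Prime) (hpS : p ∈ S) (k x : ℕ) :
    {n ∈ squarefreeUpTo S (k + 1) x | p ∣ n}.card =
      {m ∈ squarefreeUpTo S k (x / p) | ¬ p ∣ m}.card := by
  refine Eq.trans (congrArg _ ?_)
    (Finset.card_image_of_injective _ (mul_right_injective₀ hp.ne_zero))
  ext n
  simp only [Finset.mem_filter, Finset.mem_image]
  constructor
  · rintro ⟨hn, m, rfl⟩
    exact ⟨m, (prime_mul_mem_squarefreeUpTo_succ hp hpS).1 hn, rfl⟩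
  · rintro ⟨m, hm, rfl⟩
    exact ⟨(prime_mul_mem_squarefreeUpTo_succ hp hpS).2 hm, dvd_mul_right p m⟩

lemma sum_card_filter_dvd_squarefreeUpTo (S : Set ℕ) (k x : ℕ) :
    ∑ p ∈ primesUpTo S x, {n ∈ squarefreeUpTo S k x | p ∣ n}.card =
      k * (squarefreeUpTo S k x).card := by
  rw [mul_comm, ← smul_eq_mul, ← Finset.sum_const]
  refine (Finset.sum_card_bipartiteAbove_eq_sum_card_bipartiteBelow (· ∣ ·)).trans
    (Finset.sum_congr rfl fun n hn => ?_)
  obtain ⟨hnx, hsq, hcard, hS⟩ := mem_squarefreeUpTo.1 hn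
  rw [← hcard]
  congr 1
  ext p
  rw [Finset.mem_bipartiteBelow, mem_primesUpTo, Nat.mem_primeFactors]
  exact ⟨fun ⟨⟨_, hp, _⟩, hpn⟩ => ⟨hp, hpn, hsq.ne_zero⟩, fun ⟨hp, hpn, hn0⟩ =>
    ⟨⟨(Nat.le_of_dvd hn0.bot_lt hpn).trans hnx, hp, hS p (hp.mem_primeFactors hpn hn0)⟩, hpn⟩⟩

lemma pairCount_self (S : Set ℕ) (k x : ℕ) :
    pairCount S S k x = (k + 1) * squarefreeCount S (k + 1) x +
      ∑ p ∈ primesUpTo S x, ({m ∈ squarefreeUpTo S k (x / p) | p ∣ m}.card : ℝ) := by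
  have hcoprime : (k + 1) * squarefreeCount S (k + 1) x =
      ∑ p ∈ primesUpTo S x, ({m ∈ squarefreeUpTo S k (x / p) | ¬ p ∣ m}.card : ℝ) := by
    rw [squarefreeCount, ← Nat.cast_succ, ← Nat.cast_mul, ← sum_card_filter_dvd_squarefreeUpTo,
      Nat.cast_sum]
    refine Finset.sum_congr rfl fun p hp => ?_
    obtain ⟨-, hp, hpS⟩ := mem_primesUpTo.1 hp
    rw [card_filter_dvd_squarefreeUpTo_succ hp hpS]
  rw [hcoprime, ← Finset.sum_add_distrib, pairCount]
  refine Finset.sum_congr rfl fun p _ => ?_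
  rw [squarefreeCount, add_comm, ← Nat.cast_add, Finset.card_filter_add_card_filter_not]

lemma succ_mul_squarefreeCount_succ_le_pairCount (S : Set ℕ) (k x : ℕ) :
    (k + 1) * squarefreeCount S (k + 1) x ≤ pairCount S S k x := by
  rw [pairCount_self]
  exact le_add_of_nonneg_right (Finset.sum_nonneg fun _ _ => Nat.cast_nonneg _)

lemma pairCount_le_succ_mul_squarefreeCount_succ_add (S : Set ℕ) (k x : ℕ) :
    pairCount S S k x ≤ (k + 1) * squarefreeCount S (k + 1) x + k * squarefreeCount S k x := by
  rw [pairCount_self, squarefreeCount.eq_def S k, ← Nat.cast_mul,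
    ← sum_card_filter_dvd_squarefreeUpTo, Nat.cast_sum]
  gcongr with p
  exact squarefreeUpTo_subset_of_le (Nat.div_le_self x p)

end SquarefreeCounts

/-! ### Growth of the counting functions under dilation -/

section Dilation

open Topology

/-- Lower regularity under dilations: `f (x / d)` is eventually at least a fixed multiple of
`f x / d`, the multiple being the same for all `d ≥ 1`. Here `x / d` is rounded down. -/
def HasDilationBound (f : ℕ → ℝ) : Prop :=
  ∃ c : ℝ, 0 < c ∧ ∀ d : ℕ, 1 ≤ d → ∀ᶠ x : ℕ in atTop, c / d * f x ≤ f (x / d)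

lemma tendsto_natDiv_div_atTop (d : ℕ) :
    Tendsto (fun x : ℕ => ((x / d : ℕ) : ℝ) / x) atTop (𝓝 (1 / d)) := by
  refine ((tendsto_nat_floor_mul_div_atTop (R := ℝ) (a := 1 / d) (by positivity)).comp
    tendsto_natCast_atTop_atTop).congr fun x => ?_
  rw [Function.comp_apply, one_div_mul_eq_div, Nat.floor_div_eq_div]

lemma hasDilationBound_primeCount_univ : HasDilationBound (primeCount .univ) := by
  refine ⟨1 / 4, by norm_num, fun d hd => ?_⟩
  have hd0 : (0 : ℝ) < d := Nat.cast_pos.2 hd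
  have hlower := ((tendsto_primeCount_univ_mul_log_div.comp
    (Nat.tendsto_div_const_atTop (Nat.one_le_iff_ne_zero.1 hd))).mul
      (tendsto_natDiv_div_atTop d)).eventually
    (lt_mem_nhds (show 1 / (2 * d) < 1 * (1 / (d : ℝ)) by rw [one_mul]; gcongr; linarith))
  have hupper := tendsto_primeCount_univ_mul_log_div.eventually (gt_mem_nhds one_lt_two)
  filter_upwards [hlower, hupper, eventually_ge_atTop (max d 2)] with x hlower hupper hx
  obtain ⟨hdx, hx2⟩ := max_le_iff.1 hx
  have hx1 : (1 : ℝ) < x := by exact_mod_cast hx2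
  have hy0 : (0 : ℝ) < (x / d : ℕ) := Nat.cast_pos.2 (Nat.div_pos hdx hd)
  have hscale : 0 < Real.log x / x := div_pos (Real.log_pos hx1) (by linarith)
  refine le_of_mul_le_mul_right ?_ hscale
  calc 1 / 4 / d * primeCount .univ x * (Real.log x / x)
      = 1 / 4 / d * (primeCount .univ x * Real.log x / x) := by ring
    _ ≤ 1 / 4 / d * 2 := by gcongr
    _ = 1 / (2 * d) := by ring
    _ ≤ primeCount .univ (x / d) * Real.log (x / d : ℕ) / (x / d : ℕ) * ((x / d : ℕ) / x) :=
        hlower.le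
    _ = primeCount .univ (x / d) * (Real.log (x / d : ℕ) / x) := by field_simp
    _ ≤ primeCount .univ (x / d) * (Real.log x / x) := by
        gcongr
        · exact Nat.cast_nonneg _
        · exact Nat.div_le_self x d

lemma exists_le_sum_primesUpTo_one_div (M : ℝ) :
    ∃ z : ℕ, M ≤ ∑ p ∈ primesUpTo .univ z, 1 / (p : ℝ) := by
  have hnonneg (n : ℕ) : 0 ≤ {p : ℕ | p.Prime}.indicator (fun p : ℕ => 1 / (p : ℝ)) n :=
    Set.indicator_nonneg (fun _ _ => by positivity) n
  have hdiv := (not_summable_iff_tendsto_nat_atTop_of_nonneg hnonneg).1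
    not_summable_one_div_on_primes
  obtain ⟨z, hz⟩ := (hdiv.eventually_ge_atTop M).exists
  refine ⟨z, hz.trans ?_⟩
  rw [Finset.sum_indicator_eq_sum_filter]
  refine Finset.sum_le_sum_of_subset_of_nonneg (fun p hp => ?_) fun _ _ _ => by positivity
  rw [Finset.mem_filter, Finset.mem_range] at hp
  exact mem_primesUpTo.2 ⟨hp.1.le, hp.2, trivial⟩

lemma HasDilationBound.eventually_mul_squarefreeCount_le_pairCount {k : ℕ}
    (h : HasDilationBound (squarefreeCount .univ k)) (M : ℝ) :
    ∀ᶠ x in atTop, M * squarefreeCount .univ k x ≤ pairCount .univ .univ k x := by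
  obtain ⟨c, hc, hdil⟩ := h
  obtain ⟨z, hz⟩ := exists_le_sum_primesUpTo_one_div (M / c)
  have hall : ∀ᶠ x : ℕ in atTop, ∀ p ∈ primesUpTo .univ z,
      c / p * squarefreeCount .univ k x ≤ squarefreeCount .univ k (x / p) :=
    (eventually_all_finset _).2 fun p hp => hdil p (mem_primesUpTo.1 hp).2.1.one_le
  filter_upwards [hall, eventually_ge_atTop z] with x hx hzx
  calc M * squarefreeCount .univ k x
      ≤ (c * ∑ p ∈ primesUpTo .univ z, 1 / (p : ℝ)) * squarefreeCount .univ k x :=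
        mul_le_mul_of_nonneg_right ((div_le_iff₀' hc).1 hz) (squarefreeCount_nonneg _ _ _)
    _ = ∑ p ∈ primesUpTo .univ z, c / p * squarefreeCount .univ k x := by
        simp only [Finset.mul_sum, Finset.sum_mul, mul_one_div]
    _ ≤ ∑ p ∈ primesUpTo .univ z, squarefreeCount .univ k (x / p) := Finset.sum_le_sum hx
    _ ≤ pairCount .univ .univ k x := by
        refine Finset.sum_le_sum_of_subset_of_nonneg (fun p hp => ?_)
          fun _ _ _ => squarefreeCount_nonneg _ _ _
        obtain ⟨hpz, hp⟩ := mem_primesUpTo.1 hp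
        exact mem_primesUpTo.2 ⟨hpz.trans hzx, hp⟩

lemma HasDilationBound.isLittleO_squarefreeCount_succ {k : ℕ}
    (h : HasDilationBound (squarefreeCount .univ k)) :
    squarefreeCount .univ k =o[atTop] squarefreeCount .univ (k + 1) := by
  refine isLittleO_iff.2 fun ε hε => ?_
  filter_upwards [h.eventually_mul_squarefreeCount_le_pairCount ((k + 1) / ε + k)] with x hx
  rw [Real.norm_of_nonneg (squarefreeCount_nonneg _ _ _),
    Real.norm_of_nonneg (squarefreeCount_nonneg _ _ _)]
  have hupper := pairCount_le_succ_mul_squarefreeCount_succ_add .univ k x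
  have hmul : (k + 1) / ε * squarefreeCount .univ k x ≤
      (k + 1) * squarefreeCount .univ (k + 1) x := by linarith
  rw [div_mul_eq_mul_div, div_le_iff₀ hε] at hmul
  refine le_of_mul_le_mul_left ?_ (Nat.cast_add_one_pos (α := ℝ) k)
  linarith

lemma exists_forall_le_of_eventually_le {f g : ℕ → ℝ} (h : ∀ᶠ x in atTop, f x ≤ g x) :
    ∃ C : ℝ, ∀ x, f x ≤ g x + C := by
  have hbdd : IsBoundedUnder (· ≤ ·) atTop fun x => f x - g x :=
    isBoundedUnder_of_eventually_le (h.mono fun x hx => sub_nonpos.2 hx)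
  obtain ⟨C, hC⟩ := hbdd.bddAbove_range
  exact ⟨C, fun x => sub_le_iff_le_add'.1 (hC ⟨x, rfl⟩)⟩

lemma HasDilationBound.exists_mul_pairCount_le {P : Set ℕ} (h : HasDilationBound (primeCount P))
    (Q : Set ℕ) (k : ℕ) : ∃ c : ℝ, 0 < c ∧ ∀ d : ℕ, 1 ≤ d → ∃ C : ℝ, ∀ x,
      c / d * pairCount P Q k x ≤ pairCount P Q k (x / d) + C * squarefreeCount Q k x := by
  obtain ⟨c, hc, hdil⟩ := h
  refine ⟨c, hc, fun d hd => ?_⟩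
  obtain ⟨C, hC⟩ := exists_forall_le_of_eventually_le (hdil d hd)
  refine ⟨C, fun x => ?_⟩
  rw [pairCount_eq_sum_primeCount P Q k le_rfl,
    pairCount_eq_sum_primeCount P Q k (Nat.div_le_self x d), Finset.mul_sum]
  calc ∑ m ∈ squarefreeUpTo Q k x, c / d * primeCount P (x / m)
      ≤ ∑ m ∈ squarefreeUpTo Q k x, (primeCount P (x / m / d) + C) :=
        Finset.sum_le_sum fun m _ => hC (x / m)
    _ = ∑ m ∈ squarefreeUpTo Q k x, primeCount P (x / d / m) + C * squarefreeCount Q k x := by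
        simp only [Finset.sum_add_distrib, Finset.sum_const, nsmul_eq_mul, squarefreeCount,
          mul_comm C, Nat.div_right_comm x]

lemma hasDilationBound_squarefreeCount_succ {k : ℕ}
    (h : squarefreeCount .univ k =o[atTop] squarefreeCount .univ (k + 1)) :
    HasDilationBound (squarefreeCount .univ (k + 1)) := by
  obtain ⟨c, hc, hpair⟩ :=
    hasDilationBound_primeCount_univ.exists_mul_pairCount_le .univ k
  refine ⟨c / 2, by positivity, fun d hd => ?_⟩
  have : (0 : ℝ) < d := Nat.cast_pos.2 hd
  obtain ⟨C, hC⟩ := hpair d hd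
  have hsmall := (h.const_mul_left (C + k)).bound (show 0 < c / 2 / d * (k + 1) by positivity)
  filter_upwards [hsmall] with x hx
  rw [Real.norm_of_nonneg (squarefreeCount_nonneg _ _ _)] at hx
  have hmono := mul_le_mul_of_nonneg_left
    (squarefreeCount_mono .univ k (Nat.div_le_self x d)) (Nat.cast_nonneg (α := ℝ) k)
  have hupper := pairCount_le_succ_mul_squarefreeCount_succ_add .univ k (x / d)
  have hlower := mul_le_mul_of_nonneg_left
    (succ_mul_squarefreeCount_succ_le_pairCount .univ k x) (show 0 ≤ c / d by positivity)
  refine le_of_mul_le_mul_left ?_ (Nat.cast_add_one_pos (α := ℝ) k)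
  calc (k + 1) * (c / 2 / d * squarefreeCount .univ (k + 1) x)
      = c / d * ((k + 1) * squarefreeCount .univ (k + 1) x)
        - c / 2 / d * (k + 1) * squarefreeCount .univ (k + 1) x := by ring
    _ ≤ (k + 1) * squarefreeCount .univ (k + 1) (x / d) := by
        linarith [hC x, (Real.le_norm_self _).trans hx]

lemma hasDilationBound_squarefreeCount {k : ℕ} (hk : 1 ≤ k) :
    HasDilationBound (squarefreeCount .univ k) := by
  induction k, hk using Nat.le_induction with
  | base => exact squarefreeCount_one .univ ▸ hasDilationBound_primeCount_univ
  | succ k _ ih => exact hasDilationBound_squarefreeCount_succ ih.isLittleO_squarefreeCount_succ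

lemma isLittleO_squarefreeCount_succ {k : ℕ} (hk : 1 ≤ k) :
    squarefreeCount .univ k =o[atTop] squarefreeCount .univ (k + 1) :=
  (hasDilationBound_squarefreeCount hk).isLittleO_squarefreeCount_succ

lemma isLittleO_primeCount_squarefreeCount_succ {k : ℕ} (hk : 1 ≤ k) :
    primeCount .univ =o[atTop] squarefreeCount .univ (k + 1) := by
  induction k, hk using Nat.le_induction with
  | base => exact squarefreeCount_one .univ ▸ isLittleO_squarefreeCount_succ le_rfl
  | succ k hk ih => exact ih.trans (isLittleO_squarefreeCount_succ (Nat.le_add_right_of_le hk))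

end Dilation

/-! ### Squarefree integers whose prime factors have a relative density -/

section SquarefreeDensity

variable {S : Set ℕ} {δ : ℝ} {k : ℕ}

lemma isLittleO_sum_comp_div {e g v : ℕ → ℝ} {s : ℕ → Finset ℕ} (hg : ∀ x, 0 ≤ g x)
    (he : e =o[atTop] g) (hcard : (fun x => ((s x).card : ℝ)) =o[atTop] v)
    (hsum : (fun x => ∑ i ∈ s x, g (x / i)) =O[atTop] v) :
    (fun x => ∑ i ∈ s x, e (x / i)) =o[atTop] v := by
  refine isLittleO_iff.2 fun ε hε => ?_
  obtain ⟨K, hK, hsum⟩ := hsum.exists_pos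
  obtain ⟨C, hC⟩ := exists_forall_le_of_eventually_le
    (he.bound (show 0 < ε / (2 * K) by positivity))
  filter_upwards [hsum.bound, (hcard.const_mul_left C).bound (half_pos hε)] with x hsum hcard
  rw [Real.norm_of_nonneg (Finset.sum_nonneg fun i _ => hg (x / i))] at hsum
  calc ‖∑ i ∈ s x, e (x / i)‖
      ≤ ∑ i ∈ s x, (ε / (2 * K) * g (x / i) + C) :=
        norm_sum_le_of_le _ fun i _ => Real.norm_of_nonneg (hg (x / i)) ▸ hC (x / i)
    _ = ε / (2 * K) * ∑ i ∈ s x, g (x / i) + C * (s x).card := by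
        rw [Finset.sum_add_distrib, ← Finset.mul_sum, Finset.sum_const, nsmul_eq_mul, mul_comm C]
    _ ≤ ε / (2 * K) * (K * ‖v x‖) + ε / 2 * ‖v x‖ := by
        refine add_le_add ?_ ((Real.le_norm_self _).trans hcard)
        gcongr
    _ = ε * ‖v x‖ := by field_simp; ring

lemma HasRelativePrimeDensity.isLittleO_primeCount_sub (hS : HasRelativePrimeDensity S δ) :
    (fun x => primeCount S x - δ * primeCount .univ x) =o[atTop] primeCount .univ := by
  have hratio : (fun x => primeCount S x / primeCount .univ x - δ) =o[atTop] fun _ => (1 : ℝ) :=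
    (isLittleO_one_iff ℝ).2 (by simpa using hS.sub_const δ)
  refine (hratio.mul_isBigO (isBigO_refl (primeCount .univ) atTop)).congr (fun x => ?_)
    fun x => one_mul _
  have hle : primeCount S x ≤ primeCount .univ x :=
    Nat.cast_le.2 (Finset.card_le_card (primesUpTo_subset_of_subset (Set.subset_univ S) x))
  rw [sub_mul, div_mul_cancel_of_imp fun h0 => le_antisymm (h0 ▸ hle) (Nat.cast_nonneg _)]

lemma isLittleO_pairCount_self_sub (S : Set ℕ) (hk : 1 ≤ k) :
    (fun x => pairCount S S k x - (k + 1) * squarefreeCount S (k + 1) x) =o[atTop]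
      squarefreeCount .univ (k + 1) := by
  refine (IsBigO.of_bound k (Eventually.of_forall fun x => ?_)).trans_isLittleO
    (isLittleO_squarefreeCount_succ hk)
  rw [Real.norm_of_nonneg (squarefreeCount_nonneg _ _ _), Real.norm_of_nonneg
    (sub_nonneg.2 (succ_mul_squarefreeCount_succ_le_pairCount S k x)), sub_le_iff_le_add']
  refine (pairCount_le_succ_mul_squarefreeCount_succ_add S k x).trans ?_
  gcongr
  exact squarefreeCount_le_univ S k x

lemma isBigO_pairCount_univ (hk : 1 ≤ k) :
    pairCount .univ .univ k =O[atTop] squarefreeCount .univ (k + 1) := by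
  simpa using (isLittleO_pairCount_self_sub .univ hk).isBigO.add
    ((isBigO_refl (squarefreeCount .univ (k + 1)) atTop).const_mul_left (k + 1 : ℝ))

lemma HasRelativePrimeDensity.isLittleO_pairCount_sub (hS : HasRelativePrimeDensity S δ)
    (Q : Set ℕ) (hk : 1 ≤ k) :
    (fun x => pairCount S Q k x - δ * pairCount .univ Q k x) =o[atTop]
      squarefreeCount .univ (k + 1) := by
  have hpair (P : Set ℕ) (x : ℕ) := pairCount_eq_sum_primeCount P Q k (le_refl x)
  simp only [hpair, Finset.mul_sum, ← Finset.sum_sub_distrib]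
  have hcard : squarefreeCount Q k =O[atTop] squarefreeCount .univ k :=
    isBigO_of_le _ fun x => by
      rw [Real.norm_of_nonneg (squarefreeCount_nonneg _ _ _),
        Real.norm_of_nonneg (squarefreeCount_nonneg _ _ _)]
      exact squarefreeCount_le_univ Q k x
  have hsum : pairCount .univ Q k =O[atTop] pairCount .univ .univ k :=
    isBigO_of_le _ fun x => by
      have hnonneg (Q : Set ℕ) : 0 ≤ pairCount .univ Q k x :=
        Finset.sum_nonneg fun _ _ => squarefreeCount_nonneg _ _ _
      rw [Real.norm_of_nonneg (hnonneg _), Real.norm_of_nonneg (hnonneg _)]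
      exact Finset.sum_le_sum fun _ _ => squarefreeCount_le_univ Q k _
  refine isLittleO_sum_comp_div (fun _ => Nat.cast_nonneg _) hS.isLittleO_primeCount_sub
    (hcard.trans_isLittleO (isLittleO_squarefreeCount_succ hk)) ?_
  exact (hsum.trans (isBigO_pairCount_univ hk)).congr_left (hpair .univ)

lemma isLittleO_pairCount_univ_sub {κ : ℝ} (hk : 1 ≤ k)
    (h : (fun x => squarefreeCount S k x - κ * squarefreeCount .univ k x) =o[atTop]
      squarefreeCount .univ k) :
    (fun x => pairCount .univ S k x - κ * pairCount .univ .univ k x) =o[atTop]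
      squarefreeCount .univ (k + 1) := by
  simp only [pairCount, Finset.mul_sum, ← Finset.sum_sub_distrib]
  exact isLittleO_sum_comp_div (squarefreeCount_nonneg _ _) h
    (isLittleO_primeCount_squarefreeCount_succ hk) (isBigO_pairCount_univ hk)

theorem HasRelativePrimeDensity.isLittleO_squarefreeCount_sub
    (hS : HasRelativePrimeDensity S δ) (hk : 1 ≤ k) :
    (fun x => squarefreeCount S k x - δ ^ k * squarefreeCount .univ k x) =o[atTop]
      squarefreeCount .univ k := by
  induction k, hk using Nat.le_induction with
  | base => simpa only [squarefreeCount_one, pow_one] using hS.isLittleO_primeCount_sub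
  | succ k hk ih =>
    have hfirst := hS.isLittleO_pairCount_sub S hk
    have hsecond := (isLittleO_pairCount_univ_sub hk ih).const_mul_left δ
    have huniv := (isLittleO_pairCount_self_sub .univ hk).const_mul_left (δ ^ (k + 1))
    have hself := isLittleO_pairCount_self_sub S hk
    refine (((hfirst.add hsecond).add (huniv.sub hself)).const_mul_left
      (1 / (k + 1 : ℝ))).congr_left fun x => ?_
    field_simp
    ring

end SquarefreeDensity

theorem stmt_14 (b c : ℤ) (D : ℤ) (hD : D = b ^ 2 - 4 * c) (hDsq : ¬ IsSquare D)
    (k : ℕ) (hk : 1 ≤ k) :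
    IsEquivalent atTop
      (fun x : ℕ => (((Finset.range (x + 1)).filter
          (fun n : ℕ => Squarefree n ∧ n.primeFactors.card = k ∧
            Int.gcd n (2 * D) = 1 ∧
            Nat.card {r : ZMod n // r ^ 2 + b * r + c = 0} = 2 ^ k)).card : ℝ))
      (fun x : ℕ => (1 / 2 ^ k) * (((Finset.range (x + 1)).filter
          (fun n => Squarefree n ∧ n.primeFactors.card = k)).card : ℝ)) := by
  have hdiscrim : D = discrim 1 b c := by rw [hD, discrim, mul_one]
  have hcount (x : ℕ) : (Finset.range (x + 1)).filter
      (fun n : ℕ => Squarefree n ∧ n.primeFactors.card = k ∧ Int.gcd n (2 * D) = 1 ∧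
        Nat.card {r : ZMod n // r ^ 2 + b * r + c = 0} = 2 ^ k) =
      squarefreeUpTo (splitPrimes D) k x :=
    Finset.filter_congr fun n _ => and_congr_right fun hsq => and_congr_right fun hcard => by
      rw [← rootCount_quadratic, ← hcard, hdiscrim, rootCount_quadratic_eq_two_pow_iff hsq]
  have htotal (x : ℕ) : (Finset.range (x + 1)).filter
      (fun n => Squarefree n ∧ n.primeFactors.card = k) = squarefreeUpTo .univ k x := by
    ext n
    rw [mem_squarefreeUpTo_univ, Finset.mem_filter, Finset.mem_range, Nat.lt_succ_iff]
  simp only [hcount, htotal, ← one_div_pow]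
  exact ((hasRelativePrimeDensity_splitPrimes hDsq).isLittleO_squarefreeCount_sub hk).trans_isBigO
    (isBigO_self_const_mul (by positivity) _ _)
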